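/- Let K be a number field and 𝔄 a fractional ideal of K. Then the completed zeta function ξ_K(s, 𝔄), defined for Re(s) > 1, extends to a meromorphic function on ℂ whose only poles are simple poles at s = 0 and s = 1, and it satisfies the functional equation ξ_K(s, 𝔄) = ξ_K(1 − s, 𝔄*), where 𝔄* := (𝔄 𝔡_K)^{−1} is the dual ideal of 𝔄 (𝔡_K the different of K). -/

import Mathlib

/-!
The completed zeta function is the Mellin transform of a measure. Fix representatives `R` of the
nonzero unit orbits in `A`, put `V(A) = √d_K · N(A)`, and let `ν_A` (`nu`) be the sum over
`r ∈ R` of the images of `g(t) d^×t` under `t ↦ V(A) |N(t)| / |N(r)|`. Then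
`ξ_K(s, A) = ∫ y^s dν_A(y)` for `Re s > 1` (`xi_eq_integral`). Everything is first shown for
`[0, ∞]`-valued integrals of nonnegative functions, where interchanging sums and integrals needs
no justification; the only convergence facts required are the Gaussian bound
`lintegral_gamma_lt_top` and the count of ideals of bounded norm behind `tsum_repr_lt_top`.

* Poisson summation (`poisson_pi`) for the lattice `tA`, the self-duality of the Gaussian under the
  trace pairing (`fourier_fR`) and the trace duality between `A` and `A*` give the theta formula
  `V(A) N(t) θ_A(t) = θ_{A*}(t⁻¹)` for `θ_A(t) = Σ_{α ∈ A} g(tα)` (`theta_real`, `theta`). At `t = 1`, applied to `A` and then to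
  `A*`, it also yields `V(A) V(A*) = 1` (`covol_mul_covol_dual`).
* Let `X ⊆ K_ℝ^×` be a fundamental cone for the units modulo the `w` roots of unity. Unfolding
  along unit orbits identifies `w ν_A` with the image under `t ↦ V(A) |N(t)|` of
  `(θ_A(t) - 1) d^×t` on `X` (`lintegral_nu_cone`), while `d^×t` on `X` is pushed forward by the
  norm to `c dy/y` with `0 < c < ∞` (`lintegral_cone`). The theta formula therefore becomes an
  inversion formula `y ↔ y⁻¹` between `w ν_A + c dy/y` and `w ν_{A*} + c dy/y` (`nu_inversion`).
* Riemann's argument (`mellin_split`) splits the Mellin integral at `y = 1` and applies the inversion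
  formula on `(0, 1]`. The result is the pair of tails
  `∫_{y > 1} y^s dν_A + ∫_{y > 1} y^(1-s) dν_{A*}`, entire because all moments of order `> 1` are
  finite (`differentiable_mellinTail`), plus the polar part `(c/w) (1/(s-1) - 1/s)`. This
  expression is visibly invariant under exchanging `(s, A)` with `(1 - s, A*)`.
-/

noncomputable section
open NumberField MeasureTheory
open scoped nonZeroDivisors

set_option linter.unusedSectionVars false
set_option linter.unnecessarySeqFocus false

namespace Hecke

instance : MeasurableSpace (Quaternion ℝ) := borel _
instance : BorelSpace (Quaternion ℝ) := ⟨rfl⟩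

/-- The Haar (Lebesgue) measure on Hamilton's quaternions `ℍ ≅ ℝ⁴`. -/
def volH : Measure (Quaternion ℝ) :=
  Measure.map (Quaternion.linearIsometryEquivTuple.symm) volume

instance : SigmaFinite volH := by
  unfold volH
  exact (Quaternion.linearIsometryEquivTuple.symm.toHomeomorph.toMeasurableEquiv).sigmaFinite_map

noncomputable instance (F : Type) [Field F] [NumberField F] :
    Fintype {v : InfinitePlace F // v.IsReal} := by classical exact Subtype.fintype _

noncomputable instance (F : Type) [Field F] [NumberField F] :
    Fintype {v : InfinitePlace F // v.IsComplex} := by classical exact Subtype.fintype _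

variable (F : Type) [Field F] [NumberField F]

/-- `F_ℝ = F ⊗_ℚ ℝ = ∏_v F_v`. -/
abbrev RS := ({v : InfinitePlace F // v.IsReal} → ℝ) × ({v : InfinitePlace F // v.IsComplex} → ℂ)

/-- `D_F = ∏_v D_v` where `D_v = ℂ` for real `v` and `D_v = ℍ` for complex `v`. -/
abbrev DS := ({v : InfinitePlace F // v.IsReal} → ℂ) ×
  ({v : InfinitePlace F // v.IsComplex} → Quaternion ℝ)

/-- The Haar measure on `F_ℝ`: Lebesgue at real places, twice Lebesgue at complex places. -/
def measR : Measure (RS F) :=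
  (Measure.pi fun _ => (volume : Measure ℝ)).prod (Measure.pi fun _ => (2 : ENNReal) • (volume : Measure ℂ))

/-- The Haar measure on `D_F`: Lebesgue at real places, 4 times Lebesgue at complex places. -/
def measD : Measure (DS F) :=
  (Measure.pi fun _ => (volume : Measure ℂ)).prod (Measure.pi fun _ => (4 : ENNReal) • volH)

/-- `‖z‖ = ∏_{v real} |z_v| ∏_{v complex} |z_v|²` on `D_F`. -/
def normD (z : DS F) : ℝ := (∏ v, ‖z.1 v‖) * ∏ v, ‖z.2 v‖ ^ 2

/-- `|N(x)| = ∏_{v real} |x_v| ∏_{v complex} |x_v|²` on `F_ℝ`. -/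
def normR (x : RS F) : ℝ := (∏ v, |x.1 v|) * ∏ v, ‖x.2 v‖ ^ 2


/-- The structure map `F_ℝ → D_F` (componentwise `ℝ ↪ ℂ` resp. `ℂ ↪ ℍ`). -/
def structureMap : RS F →+* DS F :=
  RingHom.prod
    ((Pi.ringHom fun v => Complex.ofRealHom.comp (Pi.evalRingHom (fun _ => ℝ) v)).comp
      (RingHom.fst _ _))
    ((Pi.ringHom fun v => Quaternion.ofComplex.toRingHom.comp (Pi.evalRingHom (fun _ => ℂ) v)).comp
      (RingHom.snd _ _))

/-- The map `F → D_F`. -/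
def FtoD : F →+* DS F := (structureMap F).comp (NumberField.mixedEmbedding F)

/-- The element `j_F = (j_v)_v ∈ D_F`. -/
def jF : DS F := (fun _ => Complex.I, fun _ => ⟨0, 0, 1, 0⟩)

/-- The `x`-coordinate of `z = x + y j_F ∈ D_F` (`x ∈ F_ℝ`). -/
def projX (z : DS F) : RS F :=
  (fun v => (z.1 v).re, fun v => ⟨(z.2 v).re, (z.2 v).imI⟩)

/-- The `y`-coordinate of `z = x + y j_F ∈ D_F` (`y ∈ F_ℝ`). -/
def projY (z : DS F) : RS F :=
  (fun v => (z.1 v).im, fun v => ⟨(z.2 v).imJ, (z.2 v).imK⟩)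

/-- The trace `Tr_{F/ℚ}` extended to `F_ℝ`. -/
def TrR (x : RS F) : ℝ := (∑ v, x.1 v) + ∑ v, 2 * (x.2 v).re


/-- The character `ψ(x + y j_F) = exp(2πi Tr_{F/ℚ}(x))` on `D_F`. -/
def psiD (z : DS F) : ℂ := Complex.exp (2 * Real.pi * Complex.I * TrR F (projX F z))

lemma projX_add (z w : DS F) : projX F (z + w) = projX F z + projX F w := by
  unfold projX
  refine Prod.ext (funext fun v => ?_) (funext fun v => ?_)
  · simp
  · simp only [Prod.snd_add, Pi.add_apply, Prod.fst_add]
    exact Complex.ext (by simp) (by simp)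

lemma TrR_add (x y : RS F) : TrR F (x + y) = TrR F x + TrR F y := by
  unfold TrR
  simp [Finset.sum_add_distrib, mul_add]
  ring

lemma psiD_add (z w : DS F) : psiD F (z + w) = psiD F z * psiD F w := by
  unfold psiD
  rw [projX_add, TrR_add, ← Complex.exp_add]
  push_cast
  ring_nf

lemma psiD_zero : psiD F 0 = 1 := by
  have h0 : projX F (0 : DS F) = 0 := by
    unfold projX
    refine Prod.ext (funext fun v => ?_) (funext fun v => ?_) <;>
      simp <;> rfl
  unfold psiD
  rw [h0]
  simp [TrR]

/-- The dual lattice `Λ* = {w : ψ(λ w) = 1 for all λ ∈ Λ}`. -/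
def dualLat (Λ : AddSubgroup (DS F)) : AddSubgroup (DS F) where
  carrier := {w | ∀ l ∈ Λ, psiD F (l * w) = 1}
  zero_mem' := by
    intro l _
    rw [mul_zero, psiD_zero]
  add_mem' := by
    intro a b ha hb l hl
    rw [mul_add, psiD_add, ha l hl, hb l hl, mul_one]
  neg_mem' := by
    intro a ha l hl
    have := psiD_add F (l * a) (l * -a)
    rw [← mul_add, add_neg_cancel, mul_zero, psiD_zero, ha l hl, one_mul] at this
    exact this.symm


/-- An `O_F`-lattice in `D_F`: a discrete cocompact `O_F`-submodule. -/
def IsOFLattice (Λ : AddSubgroup (DS F)) : Prop :=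
  (∀ c : 𝓞 F, ∀ z ∈ Λ, FtoD F (c : F) * z ∈ Λ) ∧
    DiscreteTopology Λ ∧ CompactSpace (DS F ⧸ Λ)

/-- Non-degeneracy: no nonzero lattice point has `‖λ‖ = 0`. -/
def Nondeg (Λ : AddSubgroup (DS F)) : Prop :=
  ∀ l ∈ Λ, l ≠ 0 → normD F l ≠ 0

/-- `V(Λ) = V`: some fundamental domain of `Λ` in `D_F` has measure `V`. -/
def HasVol (Λ : AddSubgroup (DS F)) (V : ℝ) : Prop :=
  ∃ s : Set (DS F), IsAddFundamentalDomain Λ s (measD F) ∧ measD F s = ENNReal.ofReal V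

/-- `R` is a set of representatives of the nonzero `U_F`-orbits in `Λ`. -/
def IsRepr (Λ : AddSubgroup (DS F)) (R : Set (DS F)) : Prop :=
  (∀ r ∈ R, r ∈ Λ) ∧ (0 : DS F) ∉ R ∧
    ∀ l ∈ Λ, l ≠ 0 → ∃! r, r ∈ R ∧ ∃ ε : (𝓞 F)ˣ, FtoD F ((ε : 𝓞 F) : F) * r = l

/-- The Eisenstein series `E(Λ, s) = Σ_{λ ∈ Λ/U_F} V(Λ)^s / ‖λ‖^{2s}`, written in terms
of the covolume `V` of `Λ` and a set `R` of representatives of the nonzero `U_F`-orbits. -/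
def Eis (V : ℝ) (R : Set (DS F)) (s : ℂ) : ℂ :=
  ∑' r : R, (V : ℂ) ^ s / ((normD F (r : DS F) : ℂ)) ^ (2 * s)

/-- `T_F = F_ℝ^×`. -/
def TF : Set (RS F) := {x | IsUnit x}

/-- The multiplicative Haar measure `d^×t = ∏_v dt_v/|t_v|^{n_v}` on `F_ℝ`. -/
def measT : Measure (RS F) :=
  (measR F).withDensity fun t => ENNReal.ofReal (1 / normR F t)

/-- `f(z) = ∏_v exp(-n_v π |z_v|²)` on `D_F`. -/
def fD (z : DS F) : ℝ :=
  (∏ v, Real.exp (-(Real.pi) * ‖z.1 v‖ ^ 2)) * ∏ v, Real.exp (-(2 * Real.pi) * ‖z.2 v‖ ^ 2)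

/-- `f` restricted to `F_ℝ`. -/
def fR (x : RS F) : ℝ := fD F (structureMap F x)

/-- `Γ_F(s) = ∫_{T_F} f(t) |N(t)|^s d^×t`. -/
def GammaF (s : ℂ) : ℂ :=
  ∫ t in TF F, (fR F t : ℂ) * (normR F t : ℂ) ^ s ∂(measT F)

/-- The completed Eisenstein series `Ê(Λ, s) = Γ_F(2s) E(Λ, s)`. -/
def Ehat (V : ℝ) (R : Set (DS F)) (s : ℂ) : ℂ := GammaF F (2 * s) * Eis F V R s

/-- `D` is a (strict) fundamental domain for the multiplicative action of `U_F` on `T_F`. -/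
def IsUnitsFD (D : Set (RS F)) : Prop :=
  D ⊆ TF F ∧ ∀ t ∈ TF F, ∃! ε : (𝓞 F)ˣ,
    NumberField.mixedEmbedding F (((ε : 𝓞 F) : F)) * t ∈ D

/-- `d_F`, the absolute value of the discriminant. -/
def dF : ℕ := (NumberField.discr F).natAbs

/-- `R` is a set of representatives of the nonzero `U_F`-orbits in the fractional ideal `𝔞`. -/
def IsIdealRepr (a : FractionalIdeal (𝓞 F)⁰ F) (R : Set F) : Prop :=
  (∀ r ∈ R, r ∈ a) ∧ (0 : F) ∉ R ∧
    ∀ α ∈ a, α ≠ 0 → ∃! r, r ∈ R ∧ ∃ ε : (𝓞 F)ˣ, ((ε : 𝓞 F) : F) * r = α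

/-- The completed partial zeta function
`ξ_F(s, 𝔞) = d_F^{s/2} Γ_F(s) N(𝔞)^s Σ_{α ∈ 𝔞/U_F} |N(α)|^{-s}`, written in terms of a
set `R` of representatives of the nonzero `U_F`-orbits in `𝔞`. -/
def xiF (s : ℂ) (a : FractionalIdeal (𝓞 F)⁰ F) (R : Set F) : ℂ :=
  (dF F : ℂ) ^ (s / 2) * GammaF F s * (FractionalIdeal.absNorm a : ℂ) ^ s *
    ∑' r : R, ((|Algebra.norm ℚ (r : F)| : ℚ) : ℂ) ^ (-s)

/-- The constant `C_F = 2^{r₁} (2π)^{r₂} R_F / w_F`. -/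
def CF : ℝ :=
  2 ^ (Fintype.card {v : InfinitePlace F // v.IsReal}) *
    (2 * Real.pi) ^ (Fintype.card {v : InfinitePlace F // v.IsComplex}) *
    NumberField.Units.regulator F / (NumberField.Units.torsionOrder F : ℕ)

/-- The dual ideal `𝔟* = {x ∈ F : Tr_{F/ℚ}(βx) ∈ ℤ for all β ∈ 𝔟}`. -/
def dualIdealSet (b : FractionalIdeal (𝓞 F)⁰ F) : Set F :=
  {x | ∀ β ∈ b, ∃ n : ℤ, Algebra.trace ℚ F (β * x) = n}

/-- `B_F(a, b, s) = ∫_{T_F} f(ta) f(t⁻¹ b) |N(t)|^{2s} d^×t`. -/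
def BF (a b : RS F) (s : ℂ) : ℂ :=
  ∫ t in TF F, ((fR F (t * a) * fR F (Ring.inverse t * b) : ℝ) : ℂ) *
    (normR F t : ℂ) ^ (2 * s) ∂(measT F)

/-- The lattice `Λ = 𝔞 z + 𝔟`. -/
def latAB (a b : FractionalIdeal (𝓞 F)⁰ F) (z : DS F) : AddSubgroup (DS F) where
  carrier := {w | ∃ α ∈ a, ∃ β ∈ b, w = FtoD F α * z + FtoD F β}
  zero_mem' := ⟨0, Submodule.zero_mem _, 0, Submodule.zero_mem _, by simp⟩
  add_mem' := by
    rintro w₁ w₂ ⟨α₁, hα₁, β₁, hβ₁, rfl⟩ ⟨α₂, hα₂, β₂, hβ₂, rfl⟩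
    exact ⟨α₁ + α₂, Submodule.add_mem _ hα₁ hα₂, β₁ + β₂, Submodule.add_mem _ hβ₁ hβ₂, by
      rw [map_add, map_add, add_mul]; abel⟩
  neg_mem' := by
    rintro w ⟨α, hα, β, hβ, rfl⟩
    exact ⟨-α, Submodule.neg_mem _ hα, -β, Submodule.neg_mem _ hβ, by rw [map_neg, map_neg, neg_mul]; abel⟩

/-- `P` is a set of representatives of pairs `(α, β*) ∈ (𝔞∖{0}) × (𝔟*∖{0})` modulo
`(α, β*) ∼ (αε, β*ε⁻¹)`, `ε ∈ U_F`. -/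
def IsPairRepr (a b : FractionalIdeal (𝓞 F)⁰ F) (P : Set (F × F)) : Prop :=
  (∀ p ∈ P, p.1 ∈ a ∧ p.1 ≠ 0 ∧ p.2 ∈ dualIdealSet F b ∧ p.2 ≠ 0) ∧
    ∀ α, α ∈ a → α ≠ 0 → ∀ β, β ∈ dualIdealSet F b → β ≠ 0 →
      ∃! p, p ∈ P ∧ ∃ ε : (𝓞 F)ˣ,
        α = p.1 * ((ε : 𝓞 F) : F) ∧ β = p.2 * (((ε⁻¹ : (𝓞 F)ˣ) : 𝓞 F) : F)

/-- The function `h_F(z, 𝔞, 𝔟)`, defined through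
`(C_F/2) h_F = (N𝔞/N𝔟)|N(y)| ξ_F(2,𝔟) + V(𝔞)|N(y)| Σ e^{2πi Tr(xαβ*)} B_F(αy, β*, 1/2)`;
`Rb` is a set of representatives for `ξ_F(·, 𝔟)` and `P` one for the pair sum. -/
def hF (z : DS F) (a b : FractionalIdeal (𝓞 F)⁰ F) (Rb : Set F) (P : Set (F × F)) : ℂ :=
  (2 / CF F) *
    (((FractionalIdeal.absNorm a / FractionalIdeal.absNorm b : ℚ) : ℂ) *
        (normR F (projY F z) : ℂ) * xiF F 2 b Rb +
      ((Real.sqrt (dF F) * (FractionalIdeal.absNorm a : ℚ) * normR F (projY F z) : ℝ) : ℂ) *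
        ∑' p : P,
          Complex.exp (2 * Real.pi * Complex.I *
            (TrR F (projX F z * NumberField.mixedEmbedding F (p : F × F).1 *
              NumberField.mixedEmbedding F (p : F × F).2))) *
          BF F (projY F z * NumberField.mixedEmbedding F (p : F × F).1)
            (NumberField.mixedEmbedding F (p : F × F).2) (1 / 2))


section Quadratic

variable (K : Type) [Field K] [NumberField K] [Algebra F K]

/-- `U_{K/F} = T_{K/F} ∩ U_K`: the units `δ` of `K` with `N_{K/F}(δ) = δ · δ' = 1`,
where `x ↦ x'` is the nontrivial `F`-automorphism `τ` of `K`. -/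
def UKF (τ : K ≃ₐ[F] K) : Subgroup (𝓞 K)ˣ where
  carrier := {δ | ((δ : 𝓞 K) : K) * τ ((δ : 𝓞 K) : K) = 1}
  one_mem' := by simp
  mul_mem' := by
    intro a b ha hb
    have ha' : ((a : 𝓞 K) : K) * τ ((a : 𝓞 K) : K) = 1 := ha
    have hb' : ((b : 𝓞 K) : K) * τ ((b : 𝓞 K) : K) = 1 := hb
    show (((a * b : (𝓞 K)ˣ) : 𝓞 K) : K) * τ (((a * b : (𝓞 K)ˣ) : 𝓞 K) : K) = 1
    have hab : (((a * b : (𝓞 K)ˣ) : 𝓞 K) : K) = ((a : 𝓞 K) : K) * ((b : 𝓞 K) : K) := by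
      push_cast; ring
    rw [hab, map_mul]
    linear_combination (((b : 𝓞 K) : K) * τ ((b : 𝓞 K) : K)) * ha' + hb'
  inv_mem' := by
    intro a ha
    have ha : ((a : 𝓞 K) : K) * τ ((a : 𝓞 K) : K) = 1 := ha
    show (((a⁻¹ : (𝓞 K)ˣ) : 𝓞 K) : K) * τ (((a⁻¹ : (𝓞 K)ˣ) : 𝓞 K) : K) = 1
    have h1 : ((a : 𝓞 K) : K) * (((a⁻¹ : (𝓞 K)ˣ) : 𝓞 K) : K) = 1 := by
      rw [← map_mul, ← Units.val_mul, mul_inv_cancel, Units.val_one, map_one]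
    have h2 : τ ((a : 𝓞 K) : K) * τ (((a⁻¹ : (𝓞 K)ˣ) : 𝓞 K) : K) = 1 := by
      rw [← map_mul, h1, map_one]
    calc (((a⁻¹ : (𝓞 K)ˣ) : 𝓞 K) : K) * τ (((a⁻¹ : (𝓞 K)ˣ) : 𝓞 K) : K)
        = ((((a : 𝓞 K) : K)) * τ ((a : 𝓞 K) : K)) *
            ((((a⁻¹ : (𝓞 K)ˣ) : 𝓞 K) : K) * τ (((a⁻¹ : (𝓞 K)ˣ) : 𝓞 K) : K)) := by
          rw [ha, one_mul]
      _ = (((a : 𝓞 K) : K) * (((a⁻¹ : (𝓞 K)ˣ) : 𝓞 K) : K)) *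
            (τ ((a : 𝓞 K) : K) * τ (((a⁻¹ : (𝓞 K)ˣ) : 𝓞 K) : K)) := by ring
      _ = 1 := by rw [h1, h2, mul_one]

/-- `w_{K/F} = [U_K : U_F U_{K/F}]`. -/
def wKF (τ : K ≃ₐ[F] K) : ℕ :=
  ((Units.map (algebraMap (𝓞 F) (𝓞 K)).toMonoidHom).range ⊔ UKF F K τ).index

/-- `T_{K/F} = {u ∈ T_K : u σ(u) = 1}`, where `σ` is the extension to `K_ℝ`
of the nontrivial `F`-automorphism of `K`. -/
def TKF (σ : RS K →+* RS K) : Set (RS K) := {u | IsUnit u ∧ u * σ u = 1}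

/-- The `O_K`-lattice `u𝔄 ⊆ K_ℝ` for `u ∈ K_ℝ` and a fractional ideal `𝔄` of `K`. -/
def latIdeal (A : FractionalIdeal (𝓞 K)⁰ K) (u : RS K) : AddSubgroup (RS K) where
  carrier := {w | ∃ α ∈ A, w = u * NumberField.mixedEmbedding K α}
  zero_mem' := ⟨0, Submodule.zero_mem _, by simp⟩
  add_mem' := by
    rintro w₁ w₂ ⟨α₁, hα₁, rfl⟩ ⟨α₂, hα₂, rfl⟩
    exact ⟨α₁ + α₂, Submodule.add_mem _ hα₁ hα₂, by rw [map_add, mul_add]⟩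
  neg_mem' := by
    rintro w ⟨α, hα, rfl⟩
    exact ⟨-α, Submodule.neg_mem _ hα, by rw [map_neg, mul_neg]⟩

/-- The lattice `ρ(u𝔄) ⊆ D_F`. -/
def rhoLat (ρ : RS K ≃+ DS F) (A : FractionalIdeal (𝓞 K)⁰ K) (u : RS K) :
    AddSubgroup (DS F) :=
  (latIdeal K A u).map ρ.toAddMonoidHom


/-- The canonical map `ι : F_ℝ → K_ℝ`: the continuous ring homomorphism compatible with the
embeddings of `F` and `K`. -/
def IsIota (ι : RS F →+* RS K) : Prop :=
  Continuous ι ∧ ∀ x : F,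
    ι (NumberField.mixedEmbedding F x) = NumberField.mixedEmbedding K (algebraMap F K x)

/-- `σ : K_ℝ → K_ℝ` is the continuous extension of the nontrivial `F`-automorphism `τ` of `K`. -/
def IsSigma (τ : K ≃ₐ[F] K) (σ : RS K →+* RS K) : Prop :=
  Continuous σ ∧ ∀ x : K,
    σ (NumberField.mixedEmbedding K x) = NumberField.mixedEmbedding K (τ x)

/-- `ρ : K_ℝ → D_F` is an isomorphism of `F_ℝ`-modules preserving the Haar measures and
satisfying `g = f ∘ ρ`. -/
def IsRho (ι : RS F →+* RS K) (ρ : RS K ≃+ DS F) : Prop :=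
  (∀ (x : RS F) (w : RS K), ρ (ι x * w) = structureMap F x * ρ w) ∧
    MeasureTheory.MeasurePreserving ρ (measR K) (measD F) ∧
    ∀ w : RS K, fR K w = fD F (ρ w)

/-- `S` is a set of norm-one representatives for `T_K/T_F` and `ν` is (supported on `S`)
the quotient Haar measure, characterized by the Fubini-type property
`∫_{T_K} φ = ∫_{T_K/T_F} ∫_{T_F} φ(t·ũ) dt du`. -/
def IsQuotMeasureK (ι : RS F →+* RS K) (ν : Measure (RS K)) (S : Set (RS K)) : Prop :=
  (∀ u ∈ S, u ∈ TF K ∧ normR K u = 1) ∧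
    ∀ φ : RS K → ENNReal, Measurable φ →
      ∫⁻ t in TF K, φ t ∂(measT K) =
        ∫⁻ u in S, ∫⁻ t in TF F, φ (ι t * u) ∂(measT F) ∂ν

/-- `S₀ ⊆ S` is a fundamental domain for the action of (the image of) `U_K` on `T_K/T_F`,
the latter quotient being represented by the set `S`. -/
def IsFundDomK (ι : RS F →+* RS K) (S S₀ : Set (RS K)) : Prop :=
  S₀ ⊆ S ∧ ∀ u ∈ S, ∃! u₀, u₀ ∈ S₀ ∧ ∃ (ε : (𝓞 K)ˣ) (t : RS F), IsUnit t ∧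
    u = ι t * NumberField.mixedEmbedding K ((ε : 𝓞 K) : K) * u₀

/-- `L` is a section `T_{K/F} → T_K`, `u ↦ ũ`, with `ũ/ũ' = u` and `|N_{K/ℚ}(ũ)| = 1`,
and `ν` is the Haar measure `d^×u` on `T_{K/F}`, characterized by the Fubini-type property
`∫_{T_K} φ(t) d^×t = ∫_{T_{K/F}} ∫_{T_F} φ(t·ũ) d^×t d^×u`. -/
def IsQuotMeasureKF (σ : RS K →+* RS K) (ι : RS F →+* RS K) (L : RS K → RS K)
    (ν : Measure (RS K)) : Prop :=
  (∀ u ∈ TKF K σ, L u ∈ TF K ∧ normR K (L u) = 1 ∧ L u = u * σ (L u)) ∧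
    ∀ φ : RS K → ENNReal, Measurable φ →
      ∫⁻ t in TF K, φ t ∂(measT K) =
        ∫⁻ u in TKF K σ, ∫⁻ t in TF F, φ (ι t * L u) ∂(measT F) ∂ν

/-- `S₀` is a fundamental domain for the multiplicative action of `U_{K/F}²` on `T_{K/F}`. -/
def IsFundDomKF (τ : K ≃ₐ[F] K) (σ : RS K →+* RS K) (S₀ : Set (RS K)) : Prop :=
  S₀ ⊆ TKF K σ ∧ ∀ u ∈ TKF K σ, ∃! u₀, u₀ ∈ S₀ ∧ ∃ δ : (𝓞 K)ˣ, δ ∈ UKF F K τ ∧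
    u = NumberField.mixedEmbedding K ((((δ ^ 2 : (𝓞 K)ˣ) : 𝓞 K)) : K) * u₀

end Quadratic

/-! ### Poisson summation on ℤ^ι -/

lemma summable_int_decay {ι : Type*} [Fintype ι] {r : ℝ} (hr : (Fintype.card ι : ℝ) < r) :
    Summable fun n : ι → ℤ => (1 + ‖(fun i => (n i : ℝ) : ι → ℝ)‖) ^ (-r) := by
  classical
  let b := Pi.basisFun ℝ ι
  let L := Submodule.span ℤ (Set.range b)
  have hfr : Module.finrank ℤ L = Fintype.card ι := by
    rw [Module.finrank_eq_card_basis (b.restrictScalars ℤ)]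
  have h1 := ZLattice.summable_norm_rpow L (-r) (by rw [hfr]; linarith)
  let e : (ι → ℤ) ≃ L := (b.restrictScalars ℤ).equivFun.symm.toEquiv
  have he : ∀ n : ι → ℤ, ((e n : L) : ι → ℝ) = fun i => (n i : ℝ) := by
    intro n
    ext j
    have : ((e n : L) : ι → ℝ) = ∑ i, n i • b i := by
      simp [e, Module.Basis.equivFun_symm_apply]
    rw [this]
    simp [b, Finset.sum_apply, Pi.single_apply]
  have h2 := (e.summable_iff (f := fun l : L => ‖l‖ ^ (-r))).mpr h1
  have hr0 : 0 ≤ r := le_trans (by positivity) hr.le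
  -- the term `n = 0` has to be left out of the comparison
  refine Summable.of_norm_bounded_eventually h2 ?_
  have : ∀ᶠ n : ι → ℤ in Filter.cofinite, n ≠ 0 := by
    simp [Filter.eventually_cofinite]
  filter_upwards [this] with n hn
  have h3 : ‖e n‖ = ‖(fun i => (n i : ℝ) : ι → ℝ)‖ := by rw [← he n]; rfl
  simp only [Function.comp_apply, h3]
  rw [Real.norm_of_nonneg (by positivity)]
  refine Real.rpow_le_rpow_of_nonpos ?_ (by linarith) (by linarith)
  rw [norm_pos_iff]
  intro h
  apply hn
  ext i
  have := congrFun h i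
  simpa using this

/-- Poisson summation for `ℤ^ι ⊂ ℝ^ι`: the sum over the lattice of a continuous function of
polynomial decay is the sum of its Fourier transform, if the latter converges. -/
theorem poisson_pi {ι : Type*} [Fintype ι] {G : (ι → ℝ) → ℂ} (hG : Continuous G)
    {C r : ℝ} (hr : (Fintype.card ι : ℝ) < r)
    (hb : ∀ x, ‖G x‖ ≤ C * (1 + ‖x‖) ^ (-r))
    (hs : Summable fun m : ι → ℤ =>
      ∫ x : ι → ℝ, Complex.exp (-(2 * Real.pi * Complex.I * ∑ i, (m i : ℝ) * x i)) * G x) :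
    ∑' n : ι → ℤ, G (fun i => (n i : ℝ)) =
      ∑' m : ι → ℤ, ∫ x : ι → ℝ, Complex.exp (-(2 * Real.pi * Complex.I * ∑ i, (m i : ℝ) * x i)) * G x := by
  classical
  let c : (ι → ℤ) → (ι → ℝ) := fun n i => (n i : ℝ)
  have hr0 : 0 ≤ r := le_trans (by positivity) hr.le
  have hC : 0 ≤ C := by
    have := (norm_nonneg _).trans (hb 0)
    simpa using this
  -- bound on translates, uniform on bounded sets
  have hB : ∀ B : ℝ, 0 ≤ B → ∀ x : ι → ℝ, ‖x‖ ≤ B → ∀ n : ι → ℤ,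
      ‖G (x + c n)‖ ≤ C * (1 + B) ^ r * (1 + ‖c n‖) ^ (-r) := by
    intro B hB0 x hx n
    refine (hb _).trans ?_
    rw [mul_assoc]
    refine mul_le_mul_of_nonneg_left ?_ hC
    have h1 : ‖c n‖ ≤ ‖x + c n‖ + ‖x‖ := by
      have := norm_sub_le (x + c n) x
      simpa using this
    have h2 : 1 + ‖c n‖ ≤ (1 + B) * (1 + ‖x + c n‖) := by
      nlinarith [norm_nonneg (x + c n), mul_nonneg hB0 (norm_nonneg (x + c n))]
    rw [Real.rpow_neg (by positivity), Real.rpow_neg (by positivity), ← div_eq_mul_inv,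
      inv_eq_one_div, div_le_div_iff₀ (by positivity) (by positivity), one_mul,
      ← Real.mul_rpow (by positivity) (by positivity)]
    exact Real.rpow_le_rpow (by positivity) h2 hr0
  have hu : ∀ B : ℝ, Summable fun n : ι → ℤ => C * (1 + B) ^ r * (1 + ‖c n‖) ^ (-r) :=
    fun B => (summable_int_decay hr).mul_left _
  have hGint : Integrable G := by
    have h1 : Integrable fun x : ι → ℝ => C * (1 + ‖x‖) ^ (-r) :=
      (integrable_one_add_norm (by simpa using hr)).const_mul C
    exact h1.mono' hG.aestronglyMeasurable (Filter.Eventually.of_forall hb)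
  -- the periodization, as a continuous function on the torus
  let Φ : (ι → ℝ) → ℂ := fun x => ∑' n : ι → ℤ, G (x + c n)
  have hΦc : Continuous Φ := by
    rw [continuous_iff_continuousAt]
    intro x₀
    have h1 : ContinuousOn Φ (Metric.ball x₀ 1) := by
      refine continuousOn_tsum (fun n => (hG.comp (by fun_prop)).continuousOn)
        (hu (‖x₀‖ + 1)) ?_
      intro n x hx
      refine hB _ (by positivity) x ?_ n
      have : ‖x - x₀‖ < 1 := by simpa [dist_eq_norm] using hx
      have h2 := norm_add_le (x - x₀) x₀
      simp only [sub_add_cancel] at h2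
      linarith
    exact h1.continuousAt (Metric.ball_mem_nhds _ one_pos)
  have hΦp : ∀ x (k : ι → ℤ), Φ (x + c k) = Φ x := by
    intro x k
    have := (Equiv.addLeft k).tsum_eq fun n => G (x + c n)
    simp only [Φ]
    rw [← this]
    refine tsum_congr fun n => ?_
    congr 1
    ext i
    simp [c, add_assoc]
  let p : (ι → ℝ) → UnitAddTorus ι := fun x i => (x i : UnitAddCircle)
  have hp : IsOpenQuotientMap p :=
    IsOpenQuotientMap.piMap fun _ => QuotientAddGroup.isOpenQuotientMap_mk
  have hlift : Function.FactorsThrough Φ p := by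
    intro x y hxy
    have h1 : ∀ i, ∃ k : ℤ, x i = y i + k := by
      intro i
      have h2 : ((x i : ℝ) : UnitAddCircle) = (y i : ℝ) := congrFun hxy i
      have h3 : ((x i - y i : ℝ) : UnitAddCircle) = 0 := by
        rw [AddCircle.coe_sub, h2, sub_self]
      obtain ⟨k, hk⟩ := (AddCircle.coe_eq_zero_iff _).1 h3
      refine ⟨k, ?_⟩
      simp only [zsmul_eq_mul, mul_one] at hk
      linarith
    choose k hk using h1
    rw [← hΦp y k]
    congr 1
    ext i
    exact hk i
  let p' : C(ι → ℝ, UnitAddTorus ι) := ⟨p, hp.continuous⟩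
  have hp' : Topology.IsQuotientMap p' := hp.isQuotientMap
  let F : C(UnitAddTorus ι, ℂ) := hp'.lift ⟨Φ, hΦc⟩ hlift
  have hF : ∀ x, F (p x) = Φ x := fun x =>
    congrArg (fun f : C(ι → ℝ, ℂ) => f x) (hp'.lift_comp ⟨Φ, hΦc⟩ hlift)
  have hcoef : ∀ m : ι → ℤ, UnitAddTorus.mFourierCoeff F m =
      ∫ x : ι → ℝ, Complex.exp (-(2 * Real.pi * Complex.I * ∑ i, (m i : ℝ) * x i)) * G x := by
    intro m
    let e : (ι → ℝ) → ℂ := fun x => Complex.exp (-(2 * Real.pi * Complex.I * ∑ i, (m i : ℝ) * x i))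
    have hec : Continuous e := by
      simp only [e]
      fun_prop
    have he : ∀ x, UnitAddTorus.mFourier (-m) (p x) = e x := by
      intro x
      simp only [UnitAddTorus.mFourier, ContinuousMap.coe_mk, p, e, fourier_coe_apply]
      rw [← Complex.exp_sum]
      congr 1
      rw [Complex.ofReal_sum, Finset.mul_sum, ← Finset.sum_neg_distrib]
      refine Finset.sum_congr rfl fun i _ => ?_
      simp
      ring
    have henorm : ∀ x, ‖e x‖ = 1 := fun x => by
      rw [← he]
      simp only [UnitAddTorus.mFourier, ContinuousMap.coe_mk, norm_prod, fourier_apply,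
        Circle.norm_coe, Finset.prod_const_one]
    have hep : ∀ x n, e (x + c n) = e x := by
      intro x n
      rw [← he, ← he]
      congr 1
      ext i
      simp only [p, c, Pi.add_apply, AddCircle.coe_add]
      rw [add_eq_left, AddCircle.coe_eq_zero_iff]
      exact ⟨n i, by simp⟩
    -- unfold the integral over the torus along the translates `Q n` of the unit cube
    let Q : (ι → ℤ) → Set (ι → ℝ) := fun n => {x | ∀ i, x i ∈ Set.Ioc (n i : ℝ) (n i + 1)}
    have hQm : ∀ n, MeasurableSet (Q n) := by
      intro n
      have : Q n = Set.univ.pi fun i => Set.Ioc (n i : ℝ) (n i + 1) := by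
        ext x; simp [Q]
      rw [this]
      exact MeasurableSet.univ_pi fun i => measurableSet_Ioc
    have hQfin : volume (Q 0) ≠ ⊤ := by
      have : Q 0 = Set.univ.pi fun i => Set.Ioc (((0 : ι → ℤ) i : ℤ) : ℝ) ((0 : ι → ℤ) i + 1) := by
        ext x; simp [Q]
      rw [this, Real.volume_pi_Ioc]
      simp
    have hQu : ⋃ n, Q n = Set.univ := by
      refine Set.eq_univ_of_forall fun x => Set.mem_iUnion.2 ⟨fun i => ⌈x i⌉ - 1, fun i => ?_⟩
      have h1 := Int.le_ceil (x i)
      have h2 := Int.ceil_lt_add_one (x i)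
      push_cast
      constructor <;> linarith
    have hQd : Pairwise (Function.onFun Disjoint Q) := by
      intro n k hnk
      refine Set.disjoint_left.2 fun x hx hx' => hnk ?_
      ext i
      have h1 := hx i
      have h2 := hx' i
      have e1 : (n i : ℝ) < k i + 1 := lt_of_lt_of_le h1.1 h2.2
      have e2 : (k i : ℝ) < n i + 1 := lt_of_lt_of_le h2.1 h1.2
      norm_cast at e1 e2
      omega
    have hEint : Integrable fun x => e x * G x :=
      hGint.norm.mono' (hec.mul hG).aestronglyMeasurable
        (Filter.Eventually.of_forall fun x => by rw [norm_mul, henorm, one_mul])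
    have hshift : ∀ n, ∫ x in Q n, e x * G x = ∫ x in Q 0, e x * G (x + c n) := by
      intro n
      have hmp := measurePreserving_add_right (volume : Measure (ι → ℝ)) (c n)
      have hpre : (fun x => x + c n) ⁻¹' (Q n) = Q 0 := by
        ext x
        simp only [Q, c, Set.mem_preimage, Set.mem_ofPred_eq, Set.mem_Ioc, Pi.add_apply,
          Pi.zero_apply, Int.cast_zero]
        refine forall_congr' fun i => ?_
        constructor <;> rintro ⟨h1, h2⟩ <;> constructor <;> linarith
      rw [← hmp.setIntegral_preimage_emb (measurableEmbedding_addRight (c n)), hpre]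
      refine integral_congr_ae (Filter.Eventually.of_forall fun x => ?_)
      simp only [hep]
    rw [UnitAddTorus.mFourierCoeff_eq_integral F m 0]
    have hset : {x : ι → ℝ | ∀ i, x i ∈ Set.Ioc ((0 : ι → ℝ) i) ((0 : ι → ℝ) i + 1)} = Q 0 := by
      ext x; simp [Q]
    rw [hset]
    have h1 : ∫ x in Q 0, UnitAddTorus.mFourier (-m) (fun i => (x i : UnitAddCircle)) •
        F (fun i => (x i : UnitAddCircle)) = ∫ x in Q 0, ∑' n, e x * G (x + c n) := by
      refine integral_congr_ae (Filter.Eventually.of_forall fun x => ?_)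
      change UnitAddTorus.mFourier (-m) (p x) • F (p x) = _
      rw [he, hF, smul_eq_mul, ← tsum_mul_left]
    have hbd : ∀ n, ∀ x ∈ Q 0, ‖e x * G (x + c n)‖ ≤ C * (1 + 1) ^ r * (1 + ‖c n‖) ^ (-r) := by
      intro n x hx
      rw [norm_mul, henorm, one_mul]
      refine hB 1 zero_le_one x ((pi_norm_le_iff_of_nonneg zero_le_one).2 fun i => ?_) n
      have := hx i
      simp only [Pi.zero_apply, Int.cast_zero, zero_add, Set.mem_Ioc] at this
      rw [Real.norm_of_nonneg this.1.le]
      exact this.2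
    have hcont : ∀ n, Continuous fun x => e x * G (x + c n) := fun n => by fun_prop
    have hion : ∀ n, IntegrableOn (fun x => e x * G (x + c n)) (Q 0) := fun n =>
      Measure.integrableOn_of_bounded hQfin (hcont n).aestronglyMeasurable
        ((ae_restrict_iff' (hQm 0)).2 (Filter.Eventually.of_forall (hbd n)))
    rw [h1, ← integral_tsum_of_summable_integral_norm hion]
    · simp_rw [← hshift]
      rw [← integral_iUnion hQm hQd hEint.integrableOn, hQu, setIntegral_univ]
    · refine Summable.of_nonneg_of_le (fun n => by positivity) (fun n => ?_)
        ((hu 1).mul_right (volume.real (Q 0)))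
      have h2 := norm_setIntegral_le_of_norm_le_const hQfin.lt_top
        (f := fun x => ‖e x * G (x + c n)‖) (fun x hx => by rw [norm_norm]; exact hbd n x hx)
      rwa [Real.norm_of_nonneg (integral_nonneg fun _ => norm_nonneg _)] at h2
  have h := UnitAddTorus.hasSum_mFourier_series_apply_of_summable (f := F)
    (by rw [show UnitAddTorus.mFourierCoeff F = _ from funext hcoef]; exact hs) 0
  have h0 : F 0 = ∑' n : ι → ℤ, G (c n) := by
    have := hF 0
    simp only [Φ, zero_add] at this
    rw [← this]; congr 1
  rw [h0] at h
  rw [← h.tsum_eq]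
  refine tsum_congr fun m => ?_
  rw [hcoef]
  simp [UnitAddTorus.mFourier]

/-! ### Riemann's splitting of a Mellin transform -/

/-- The upper half `∫_{y > 1} y^s dν` of the Mellin transform of `ν`. -/
def mellinTail (ν : Measure ℝ) (s : ℂ) : ℂ := ∫ y in Set.Ioi 1, (y : ℂ) ^ s ∂ν

lemma measurable_ofReal_cpow (s : ℂ) : Measurable fun y : ℝ => (y : ℂ) ^ s :=
  Complex.measurable_ofReal.pow_const s

/-- A measure all of whose large moments are finite has an entire upper Mellin transform. -/
lemma differentiable_mellinTail {ν : Measure ℝ}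
    (hmom : ∀ σ : ℝ, 1 < σ → ∫⁻ y, ENNReal.ofReal (y ^ σ) ∂ν < ⊤) :
    Differentiable ℂ (mellinTail ν) := by
  have hexp : ∀ t : ℝ, t ∈ ProbabilityTheory.integrableExpSet Real.log (ν.restrict (Set.Ioi 1)) := by
    intro t
    change Integrable (fun y => Real.exp (t * Real.log y)) (ν.restrict (Set.Ioi 1))
    have hm : Measurable fun y => Real.exp (t * Real.log y) :=
      (Real.measurable_log.const_mul t).exp
    refine ⟨hm.aestronglyMeasurable, ?_⟩
    refine lt_of_le_of_lt ?_ (hmom (max t 2) (lt_max_of_lt_right one_lt_two))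
    refine le_trans ?_ (setLIntegral_le_lintegral (Set.Ioi 1) _)
    refine setLIntegral_mono' measurableSet_Ioi fun y hy => ?_
    have hy1 : (1 : ℝ) < y := hy
    rw [← ofReal_norm, Real.norm_of_nonneg (Real.exp_pos _).le]
    refine ENNReal.ofReal_le_ofReal ?_
    rw [mul_comm, ← Real.rpow_def_of_pos (by linarith)]
    exact Real.rpow_le_rpow_of_exponent_le hy1.le (le_max_left _ _)
  have huniv : ProbabilityTheory.integrableExpSet Real.log (ν.restrict (Set.Ioi 1)) = Set.univ :=
    Set.eq_univ_of_forall hexp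
  have heq : mellinTail ν = ProbabilityTheory.complexMGF Real.log (ν.restrict (Set.Ioi 1)) := by
    funext s
    unfold mellinTail ProbabilityTheory.complexMGF
    refine setIntegral_congr_fun measurableSet_Ioi fun y hy => ?_
    have hy1 : (1 : ℝ) < y := hy
    have hy0 : (y : ℂ) ≠ 0 := by exact_mod_cast (by linarith : y ≠ 0)
    rw [Complex.cpow_def_of_ne_zero hy0, ← Complex.ofReal_log (by linarith), mul_comm]
  rw [heq]
  intro s
  refine (ProbabilityTheory.hasDerivAt_complexMGF ?_).differentiableAt
  rw [huniv, interior_univ]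
  exact Set.mem_univ _

lemma norm_cpow_of_pos {y : ℝ} (hy : 0 < y) (s : ℂ) : ‖(y : ℂ) ^ s‖ = y ^ s.re :=
  Complex.norm_cpow_eq_rpow_re_of_pos hy s

lemma integrable_cpow_of_moment {ν : Measure ℝ} (hpos : ν (Set.Iic 0) = 0)
    (hmom : ∀ σ : ℝ, 1 < σ → ∫⁻ y, ENNReal.ofReal (y ^ σ) ∂ν < ⊤) {s : ℂ} (hs : 1 < s.re) :
    Integrable (fun y : ℝ => (y : ℂ) ^ s) ν := by
  refine ⟨(measurable_ofReal_cpow s).aestronglyMeasurable, ?_⟩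
  refine lt_of_le_of_lt (lintegral_mono_ae ?_) (hmom s.re hs)
  have : ∀ᵐ y ∂ν, y ∉ Set.Iic (0 : ℝ) := measure_eq_zero_iff_ae_notMem.1 hpos
  filter_upwards [this] with y hy
  rw [← ofReal_norm, norm_cpow_of_pos (not_le.1 hy)]

/-- Riemann's splitting: an inversion formula `y ↔ y⁻¹` between `ν` and `ν'` turns the Mellin
transform of `ν` into two upper tails and the polar terms. -/
lemma mellin_split {ν ν' : Measure ℝ} (hpos : ν (Set.Iic 0) = 0)
    (hmom : ∀ σ : ℝ, 1 < σ → ∫⁻ y, ENNReal.ofReal (y ^ σ) ∂ν < ⊤)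
    (h1 : ν' {1} = 0) {w c : ENNReal} (hw : w ≠ 0) (hw' : w ≠ ⊤) (hc' : c ≠ ⊤)
    (hinv : ∀ k : ℝ → ENNReal, Measurable k →
      w * ∫⁻ y, k y ∂ν + c * ∫⁻ y in Set.Ioi 0, ENNReal.ofReal (1 / y) * k y =
      w * ∫⁻ y, ENNReal.ofReal y * k y⁻¹ ∂ν' + c * ∫⁻ y in Set.Ioi 0, k y⁻¹)
    {s : ℂ} (hs : 1 < s.re) :
    ∫ y, (y : ℂ) ^ s ∂ν = mellinTail ν s + mellinTail ν' (1 - s) +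
      (-(c / w).toReal : ℝ) / s + ((c / w).toReal : ℝ) / (s - 1) := by
  have hs0 : s ≠ 0 := by rintro rfl; simp at hs; linarith
  have hs1 : s - 1 ≠ 0 := by
    intro h
    have := congrArg Complex.re h
    simp at this; linarith
  set F : ℝ → ℂ := fun y => (y : ℂ) ^ s with hF
  have hFm : Measurable F := measurable_ofReal_cpow s
  have hFi : Integrable F ν := integrable_cpow_of_moment hpos hmom hs
  -- the inversion formula restricted to `(0, 1]`, as an identity of measures
  have hM : w • ν.restrict (Set.Ioc 0 1) +
      c • (volume.restrict (Set.Ioc 0 1)).withDensity (fun y : ℝ => ENNReal.ofReal (1 / y)) =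
      (w • (ν'.restrict (Set.Ici 1)).withDensity ENNReal.ofReal +
        c • volume.restrict (Set.Ici 1)).map (fun y : ℝ => y⁻¹) := by
    refine Measure.ext_of_lintegral _ fun f hf => ?_
    have hk : Measurable ((Set.Ioc (0 : ℝ) 1).indicator f) := hf.indicator measurableSet_Ioc
    have hki : ∀ y : ℝ, (Set.Ioc (0 : ℝ) 1).indicator f y⁻¹ =
        (Set.Ici (1 : ℝ)).indicator (fun y => f y⁻¹) y := by
      intro y
      have : y⁻¹ ∈ Set.Ioc (0 : ℝ) 1 ↔ y ∈ Set.Ici (1 : ℝ) := by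
        rw [Set.mem_Ioc, inv_pos, Set.mem_Ici]
        constructor
        · rintro ⟨h, h'⟩; exact (inv_le_one₀ h).1 h'
        · intro h
          have h0 : 0 < y := by linarith
          exact ⟨h0, (inv_le_one₀ h0).2 h⟩
      by_cases hy : y ∈ Set.Ici (1 : ℝ)
      · rw [Set.indicator_of_mem (this.2 hy), Set.indicator_of_mem hy]
      · rw [Set.indicator_of_notMem (fun h => hy (this.1 h)), Set.indicator_of_notMem hy]
    have hfi : Measurable fun y : ℝ => f y⁻¹ := hf.comp measurable_inv
    have key := hinv _ hk
    simp_rw [hki] at key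
    rw [lintegral_map hf measurable_inv, lintegral_add_measure, lintegral_add_measure,
      lintegral_smul_measure, lintegral_smul_measure, lintegral_smul_measure,
      lintegral_smul_measure, lintegral_withDensity_eq_lintegral_mul _ (by fun_prop) hf,
      lintegral_withDensity_eq_lintegral_mul _ (by fun_prop) hfi]
    simp only [smul_eq_mul]
    have e1 : ∫⁻ y in Set.Ioc (0 : ℝ) 1, f y ∂ν = ∫⁻ y, (Set.Ioc (0 : ℝ) 1).indicator f y ∂ν :=
      (lintegral_indicator measurableSet_Ioc _).symm
    have e2 : ∫⁻ y in Set.Ioc (0 : ℝ) 1, ((fun y : ℝ => ENNReal.ofReal (1 / y)) * f) y =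
        ∫⁻ y in Set.Ioi (0 : ℝ), ENNReal.ofReal (1 / y) * (Set.Ioc (0 : ℝ) 1).indicator f y := by
      rw [← lintegral_indicator measurableSet_Ioc, ← lintegral_indicator measurableSet_Ioi]
      refine lintegral_congr fun y => ?_
      by_cases hy : y ∈ Set.Ioc (0 : ℝ) 1
      · rw [Set.indicator_of_mem hy, Set.indicator_of_mem (Set.mem_Ioi.2 hy.1),
          Set.indicator_of_mem hy]; rfl
      · rw [Set.indicator_of_notMem hy]
        symm
        rw [Set.indicator_apply_eq_zero]
        intro _
        rw [Set.indicator_of_notMem hy, mul_zero]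
    have e3 : ∫⁻ y in Set.Ici (1 : ℝ), (ENNReal.ofReal * fun y : ℝ => f y⁻¹) y ∂ν' =
        ∫⁻ y, ENNReal.ofReal y * (Set.Ici (1 : ℝ)).indicator (fun y => f y⁻¹) y ∂ν' := by
      rw [← lintegral_indicator measurableSet_Ici]
      refine lintegral_congr fun y => ?_
      by_cases hy : y ∈ Set.Ici (1 : ℝ)
      · rw [Set.indicator_of_mem hy, Set.indicator_of_mem hy]; rfl
      · rw [Set.indicator_of_notMem hy, Set.indicator_of_notMem hy, mul_zero]
    have e4 : ∫⁻ y in Set.Ici (1 : ℝ), f y⁻¹ =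
        ∫⁻ y in Set.Ioi (0 : ℝ), (Set.Ici (1 : ℝ)).indicator (fun y => f y⁻¹) y := by
      rw [setLIntegral_indicator measurableSet_Ici, Set.inter_eq_left.2]
      exact fun y hy => Set.mem_Ioi.2 (lt_of_lt_of_le zero_lt_one (Set.mem_Ici.1 hy))
    rw [e1, e2, e3, e4]
    exact key
  -- integrability of `y ↦ y^s` with respect to each of the four pieces
  have i1 : Integrable F (w • ν.restrict (Set.Ioc 0 1)) :=
    hFi.restrict.smul_measure hw'
  have hd2 : ∀ᵐ y : ℝ ∂(volume.restrict (Set.Ioc (0 : ℝ) 1)), ENNReal.ofReal (1 / y) < ⊤ :=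
    Filter.Eventually.of_forall fun _ => ENNReal.ofReal_lt_top
  have hFs : ∀ y ∈ Set.Ioc (0 : ℝ) 1, (ENNReal.ofReal (1 / y)).toReal • F y =
      (y : ℂ) ^ (s - 1) := by
    intro y hy
    have hy0 : (y : ℂ) ≠ 0 := by exact_mod_cast hy.1.ne'
    rw [ENNReal.toReal_ofReal (one_div_nonneg.2 hy.1.le), Complex.cpow_sub _ _ hy0,
      Complex.cpow_one, Complex.real_smul]
    push_cast
    ring
  have hre : -1 < (s - 1).re := by simp; linarith
  have i2' : IntegrableOn (fun y : ℝ => (y : ℂ) ^ (s - 1)) (Set.Ioc 0 1) := by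
    rw [← intervalIntegrable_iff_integrableOn_Ioc_of_le zero_le_one]
    exact intervalIntegral.intervalIntegrable_cpow' hre
  have i2 : Integrable F (c • (volume.restrict (Set.Ioc (0 : ℝ) 1)).withDensity
      (fun y : ℝ => ENNReal.ofReal (1 / y))) := by
    refine Integrable.smul_measure ?_ hc'
    rw [integrable_withDensity_iff_integrable_smul' (by fun_prop) hd2]
    exact (integrableOn_congr_fun hFs measurableSet_Ioc).2 i2'
  have i34 : Integrable (fun y : ℝ => F y⁻¹)
      (w • (ν'.restrict (Set.Ici 1)).withDensity ENNReal.ofReal + c • volume.restrict (Set.Ici 1)) := by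
    have h := i1.add_measure i2
    rw [hM] at h
    exact (integrable_map_measure hFm.aestronglyMeasurable measurable_inv.aemeasurable).1 h
  have hInt := congrArg (fun μ : Measure ℝ => ∫ y, F y ∂μ) hM
  rw [integral_map measurable_inv.aemeasurable hFm.aestronglyMeasurable,
    integral_add_measure i1 i2, integral_add_measure i34.left_of_add_measure
      i34.right_of_add_measure, integral_smul_measure, integral_smul_measure,
    integral_smul_measure, integral_smul_measure,
    integral_withDensity_eq_integral_toReal_smul (by fun_prop) hd2,
    integral_withDensity_eq_integral_toReal_smul (by fun_prop)
      (Filter.Eventually.of_forall fun _ => ENNReal.ofReal_lt_top)] at hInt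
  have e2 : ∫ y in Set.Ioc (0 : ℝ) 1, (ENNReal.ofReal (1 / y)).toReal • F y = 1 / s := by
    rw [setIntegral_congr_fun measurableSet_Ioc hFs, ← intervalIntegral.integral_of_le zero_le_one,
      integral_cpow (Or.inl hre)]
    simp [hs0]
  have e3 : ∫ y in Set.Ici (1 : ℝ), (ENNReal.ofReal y).toReal • F y⁻¹ ∂ν' =
      mellinTail ν' (1 - s) := by
    rw [mellinTail, ← setIntegral_congr_set (Ioi_ae_eq_Ici' h1)]
    refine setIntegral_congr_fun measurableSet_Ioi fun y hy => ?_
    have hy0 : 0 < y := lt_trans zero_lt_one hy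
    have hy0' : (y : ℂ) ≠ 0 := by exact_mod_cast hy0.ne'
    simp only [hF]
    rw [ENNReal.toReal_ofReal hy0.le, Complex.cpow_sub _ _ hy0', Complex.cpow_one,
      Complex.real_smul, Complex.ofReal_inv, Complex.inv_cpow _ _ (by
        rw [Complex.arg_ofReal_of_nonneg hy0.le]; exact Real.pi_pos.ne), div_eq_mul_inv]
  have e4 : ∫ y in Set.Ici (1 : ℝ), F y⁻¹ = 1 / (s - 1) := by
    rw [integral_Ici_eq_integral_Ioi]
    have : ∀ y ∈ Set.Ioi (1 : ℝ), F y⁻¹ = (y : ℂ) ^ (-s) := by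
      intro y hy
      have hy0 : 0 < y := lt_trans zero_lt_one hy
      simp only [hF]
      rw [Complex.ofReal_inv, Complex.inv_cpow _ _ (by
        rw [Complex.arg_ofReal_of_nonneg hy0.le]; exact Real.pi_pos.ne), Complex.cpow_neg]
    rw [setIntegral_congr_fun measurableSet_Ioi this,
      integral_Ioi_cpow_of_lt (by simpa using hs) zero_lt_one]
    have : -s + 1 ≠ 0 := by
      intro h; apply hs1; linear_combination -h
    rw [Complex.ofReal_one, Complex.one_cpow]
    field_simp
    ring
  rw [e2, e3, e4] at hInt
  simp only [Complex.real_smul] at hInt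
  have hsplit : ∫ y, F y ∂ν = ∫ y in Set.Ioc (0 : ℝ) 1, F y ∂ν + mellinTail ν s := by
    have hcompl : (Set.Iic (0 : ℝ))ᶜ = Set.Ioi 0 := Set.compl_Iic
    have hr : ν.restrict (Set.Ioi 0) = ν := by
      rw [← hcompl]
      exact Measure.restrict_eq_self_of_ae_mem (measure_eq_zero_iff_ae_notMem.1 hpos)
    have hsub : Set.Ioc (0 : ℝ) 1 ⊆ Set.Ioi 0 := Set.Ioc_subset_Ioi_self
    have hsub' : Set.Ioi (1 : ℝ) ⊆ Set.Ioi 0 := Set.Ioi_subset_Ioi zero_le_one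
    rw [← hr, mellinTail, Measure.restrict_restrict measurableSet_Ioc,
      Measure.restrict_restrict measurableSet_Ioi,
      Set.inter_eq_left.2 hsub, Set.inter_eq_left.2 hsub',
      ← Set.Ioc_union_Ioi_eq_Ioi (zero_le_one (α := ℝ)),
      setIntegral_union (Set.Ioc_disjoint_Ioi le_rfl) measurableSet_Ioi hFi.integrableOn
        hFi.integrableOn]
  have hwr : (w.toReal : ℂ) ≠ 0 := by
    exact_mod_cast (ENNReal.toReal_pos hw hw').ne'
  rw [hsplit, ENNReal.toReal_div]
  push_cast
  field_simp
  field_simp at hInt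
  linear_combination hInt

section Zeta

variable (K : Type) [Field K] [NumberField K]

/-! ### The norm and the Haar measures on K_ℝ -/

lemma normR_eq (x : RS K) : normR K x = mixedEmbedding.norm x := by
  classical
  rw [mixedEmbedding.norm_apply, ← Fintype.prod_subtype_mul_prod_subtype
    (fun w : InfinitePlace K => w.IsReal)]
  unfold normR
  congr 1
  · refine Finset.prod_congr (by congr) fun w _ => ?_
    rw [mixedEmbedding.normAtPlace_apply_of_isReal w.2, InfinitePlace.mult_isReal w, pow_one]
    rfl
  · have e : ∀ w : InfinitePlace K, w.IsComplex ↔ ¬ w.IsReal := fun w =>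
      InfinitePlace.not_isReal_iff_isComplex.symm
    refine Fintype.prod_equiv (Equiv.subtypeEquivRight e) _ _ fun w => ?_
    change _ = mixedEmbedding.normAtPlace w.1 x ^ InfinitePlace.mult w.1
    rw [mixedEmbedding.normAtPlace_apply_of_isComplex w.2, InfinitePlace.mult_isComplex w]

lemma normR_mul (x y : RS K) : normR K (x * y) = normR K x * normR K y := by
  simp_rw [normR_eq, map_mul]

lemma normR_nonneg (x : RS K) : 0 ≤ normR K x := by
  rw [normR_eq]; exact mixedEmbedding.norm_nonneg x

lemma normR_one : normR K 1 = 1 := by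
  rw [normR_eq]; exact map_one _

lemma continuous_normR : Continuous (normR K) := by
  unfold normR
  fun_prop

lemma normR_ne_zero_iff (x : RS K) : normR K x ≠ 0 ↔ (∀ v, x.1 v ≠ 0) ∧ ∀ v, x.2 v ≠ 0 := by
  unfold normR
  rw [mul_ne_zero_iff, Finset.prod_ne_zero_iff, Finset.prod_ne_zero_iff]
  simp

lemma mul_inv_RS {x : RS K} (hx : normR K x ≠ 0) : x * x⁻¹ = 1 := by
  rw [normR_ne_zero_iff] at hx
  ext v
  · simp [hx.1 v]
  · simp [hx.2 v]

lemma isUnit_RS_iff (x : RS K) : IsUnit x ↔ normR K x ≠ 0 := by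
  constructor
  · rintro ⟨u, rfl⟩ h
    have := normR_mul K (u : RS K) (↑u⁻¹)
    rw [Units.mul_inv, normR_one, h, zero_mul] at this
    exact one_ne_zero this
  · intro h
    exact IsUnit.of_mul_eq_one _ (mul_inv_RS K h)

lemma normR_inv {x : RS K} : normR K x⁻¹ = (normR K x)⁻¹ := by
  simp [normR, mul_comm, Finset.prod_inv_distrib]

/-- `measR` is Lebesgue measure up to a factor `2` for each complex place. -/
lemma measR_eq : measR K =
    (2 : ENNReal) ^ (InfinitePlace.nrComplexPlaces K) • (volume : Measure (RS K)) := by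
  have : Measure.IsAddHaarMeasure ((2 : ENNReal) • (volume : Measure ℂ)) :=
    Measure.IsAddHaarMeasure.smul _ (by simp) (by simp)
  have h1 : (Measure.pi fun _ : {v : InfinitePlace K // v.IsComplex} =>
      (2 : ENNReal) • (volume : Measure ℂ)) =
      (2 : ENNReal) ^ (InfinitePlace.nrComplexPlaces K) • Measure.pi fun _ => volume := by
    refine Measure.pi_eq fun s hs => ?_
    rw [Measure.smul_apply, Measure.pi_pi]
    simp only [Measure.smul_apply, smul_eq_mul, Finset.prod_mul_distrib, Finset.prod_const]
    congr 2
  unfold measR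
  rw [h1, Measure.prod_smul_right]
  rfl

instance : Measure.IsAddHaarMeasure (measR K) := by
  rw [measR_eq]
  refine Measure.IsAddHaarMeasure.smul _ (by simp) (by simp)

/-- Multiplication by `a` on `K_ℝ` has determinant `±N(a)`: the factors of `K_ℝ` contribute
`a_w` at real places and `|a_w|²` at complex ones. -/
lemma det_mulLeft (a : RS K) : |(LinearMap.mulLeft ℝ a).det| = normR K a := by
  have h : LinearMap.mulLeft ℝ a =
      LinearMap.prodMap (LinearMap.pi fun v => (LinearMap.mulLeft ℝ (a.1 v)).comp (LinearMap.proj v))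
        (LinearMap.pi fun v => (LinearMap.mulLeft ℝ (a.2 v)).comp (LinearMap.proj v)) := by
    ext <;> rfl
  rw [h, LinearMap.det_prodMap, LinearMap.det_pi, LinearMap.det_pi, normR, abs_mul,
    Finset.abs_prod, Finset.abs_prod]
  congr 1
  · refine Finset.prod_congr rfl fun v _ => ?_
    have : LinearMap.mulLeft ℝ (a.1 v) = a.1 v • LinearMap.id := by ext; simp
    rw [this]; simp
  · refine Finset.prod_congr rfl fun v _ => ?_
    have : (LinearMap.mulLeft ℝ (a.2 v)).det = Algebra.norm ℝ (a.2 v) := rfl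
    rw [this, Algebra.norm_complex_apply, Complex.normSq_eq_norm_sq, abs_of_nonneg (by positivity)]

/-- The Lebesgue measure scales by `|N(a)|` under multiplication by `a`. -/
lemma lintegral_measR_mul {a : RS K} (ha : normR K a ≠ 0) (h : RS K → ENNReal) (hh : Measurable h) :
    ENNReal.ofReal (normR K a) * ∫⁻ x, h (a * x) ∂(measR K) = ∫⁻ x, h x ∂(measR K) := by
  have hdet : (LinearMap.mulLeft ℝ a).det ≠ 0 := by
    rw [← abs_ne_zero, det_mulLeft]; exact ha
  have h1 := Measure.map_linearMap_addHaar_eq_smul_addHaar (measR K) hdet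
  have h2 : ∫⁻ x, h (a * x) ∂(measR K) = ∫⁻ x, h x ∂((measR K).map (LinearMap.mulLeft ℝ a)) := by
    rw [lintegral_map hh (LinearMap.continuous_of_finiteDimensional _).measurable]
    rfl
  rw [h2, h1, lintegral_smul_measure, abs_inv, det_mulLeft, smul_eq_mul, ← mul_assoc,
    ← ENNReal.ofReal_mul (normR_nonneg K a), mul_inv_cancel₀ ha, ENNReal.ofReal_one, one_mul]

lemma lintegral_measT (h : RS K → ENNReal) :
    ∫⁻ x, h x ∂(measT K) = ∫⁻ x, ENNReal.ofReal (1 / normR K x) * h x ∂(measR K) := by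
  unfold measT
  rw [lintegral_withDensity_eq_lintegral_mul_non_measurable₀ _
    ((continuous_normR K).measurable.const_div _).ennreal_ofReal.aemeasurable
    (Filter.Eventually.of_forall fun _ => ENNReal.ofReal_lt_top)]
  rfl

lemma measurableSet_TF : MeasurableSet (TF K) := by
  have : TF K = normR K ⁻¹' {0}ᶜ := by
    ext x; exact isUnit_RS_iff K x
  rw [this]
  exact (continuous_normR K).measurable (measurableSet_singleton 0).compl

/-- The non-units are `d^×t`-null, so restricting to `T_K` changes nothing. -/
lemma measT_restrict_TF : (measT K).restrict (TF K) = measT K := by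
  refine Measure.restrict_eq_self_of_ae_mem ?_
  rw [ae_iff, ← nonpos_iff_eq_zero]
  change measT K (TF K)ᶜ ≤ 0
  rw [← lintegral_indicator_one (measurableSet_TF K).compl, lintegral_measT, nonpos_iff_eq_zero]
  rw [← lintegral_zero (μ := measR K)]
  refine lintegral_congr fun x => ?_
  by_cases hx : normR K x = 0
  · simp [hx]
  · have : x ∈ TF K := (isUnit_RS_iff K x).2 hx
    simp [this]

lemma ae_normR_ne_zero : ∀ᵐ x ∂(measT K), normR K x ≠ 0 := by
  rw [← measT_restrict_TF]
  filter_upwards [ae_restrict_mem (measurableSet_TF K)] with x hx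
  exact (isUnit_RS_iff K x).1 hx

/-- Multiplicative invariance of `d^×t`. -/
lemma lintegral_measT_mul {a : RS K} (ha : normR K a ≠ 0) (h : RS K → ENNReal)
    (hh : Measurable h) :
    ∫⁻ x, h (a * x) ∂(measT K) = ∫⁻ x, h x ∂(measT K) := by
  have hpos : 0 < normR K a := lt_of_le_of_ne (normR_nonneg K a) (Ne.symm ha)
  rw [lintegral_measT, lintegral_measT, ← lintegral_measR_mul K ha
    (fun x => ENNReal.ofReal (1 / normR K x) * h x), ← lintegral_const_mul']
  · refine lintegral_congr fun x => ?_
    have e : 1 / normR K x = normR K a * (1 / normR K (a * x)) := by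
      rw [normR_mul]
      field_simp
    rw [← mul_assoc, ← ENNReal.ofReal_mul hpos.le, e]
  · exact ENNReal.ofReal_ne_top
  · exact ((continuous_normR K).measurable.const_div _).ennreal_ofReal.mul hh

/-- Invariance of `d^×t` under inversion. -/
lemma lintegral_measT_inv (h : RS K → ENNReal) :
    ∫⁻ x, h x⁻¹ ∂(measT K) = ∫⁻ x, h x ∂(measT K) := by
  have hTinv : ∀ x ∈ TF K, x⁻¹ ∈ TF K := by
    intro x hx
    have := (isUnit_RS_iff K x).1 hx
    refine (isUnit_RS_iff K _).2 ?_
    rw [normR_inv]; exact inv_ne_zero this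
  have himg : (fun x : RS K => x⁻¹) '' TF K = TF K := by
    ext x
    constructor
    · rintro ⟨y, hy, rfl⟩; exact hTinv y hy
    · intro hx; exact ⟨x⁻¹, hTinv x hx, inv_inv x⟩
  have hinj : Set.InjOn (fun x : RS K => x⁻¹) (TF K) := fun x _ y _ hxy => inv_injective hxy
  have hder : ∀ x ∈ TF K, HasFDerivWithinAt (fun x : RS K => x⁻¹)
      (-(ContinuousLinearMap.mulLeftRight ℝ (RS K) x⁻¹ x⁻¹)) (TF K) x := by
    rintro _ ⟨u, rfl⟩
    have h1 := (hasFDerivAt_ringInverse (𝕜 := ℝ) u).hasFDerivWithinAt (s := TF K)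
    have hinv : ∀ x ∈ TF K, x⁻¹ = Ring.inverse x := by
      rintro _ ⟨w, rfl⟩
      rw [Ring.inverse_unit]
      have := mul_inv_RS K ((isUnit_RS_iff K w).1 w.isUnit)
      exact (Units.inv_eq_of_mul_eq_one_right this).symm
    have h2 : (u : RS K)⁻¹ = ↑u⁻¹ := by rw [hinv _ u.isUnit, Ring.inverse_unit]
    rw [h2]
    exact h1.congr hinv (hinv _ u.isUnit)
  have key := lintegral_image_eq_lintegral_abs_det_fderiv_mul (measR K) (measurableSet_TF K)
    hder hinj (fun x => ENNReal.ofReal (1 / normR K x) * h x)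
  rw [himg] at key
  have hres : ∀ φ : RS K → ENNReal, ∫⁻ x, φ x ∂(measT K) =
      ∫⁻ x in TF K, ENNReal.ofReal (1 / normR K x) * φ x ∂(measR K) := by
    intro φ
    rw [lintegral_measT, ← lintegral_indicator (measurableSet_TF K)]
    refine lintegral_congr fun x => ?_
    by_cases hx : normR K x = 0
    · have : x ∉ TF K := fun h' => (isUnit_RS_iff K x).1 h' hx
      rw [Set.indicator_of_notMem this, hx]
      simp
    · have : x ∈ TF K := (isUnit_RS_iff K x).2 hx
      rw [Set.indicator_of_mem this]
  rw [hres, hres, key]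
  refine setLIntegral_congr_fun (measurableSet_TF K) fun x hx => ?_
  have hx0 := (isUnit_RS_iff K x).1 hx
  have hpos : 0 < normR K x := lt_of_le_of_ne (normR_nonneg K x) (Ne.symm hx0)
  have hdet : |(-(ContinuousLinearMap.mulLeftRight ℝ (RS K) x⁻¹ x⁻¹)).det| =
      (normR K x)⁻¹ * (normR K x)⁻¹ := by
    have e : ((-(ContinuousLinearMap.mulLeftRight ℝ (RS K) x⁻¹ x⁻¹) : RS K →L[ℝ] RS K) :
        RS K →ₗ[ℝ] RS K) = LinearMap.mulLeft ℝ (-(x⁻¹ * x⁻¹)) := by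
      refine LinearMap.ext fun y => ?_
      change -(x⁻¹ * y * x⁻¹) = -(x⁻¹ * x⁻¹) * y
      ring
    rw [ContinuousLinearMap.det, e, det_mulLeft, ← normR_inv, ← normR_mul]
    simp [normR]
  simp only [hdet]
  rw [← mul_assoc, ← ENNReal.ofReal_mul (by positivity), normR_inv]
  congr 2
  field_simp

/-! ### The trace form and the self-dual Gaussian -/

lemma TrR_mixedEmbedding (x : K) :
    TrR K (mixedEmbedding K x) = ((Algebra.trace ℚ K x : ℚ) : ℝ) := by
  classical
  have h1 := congr_arg Complex.re (trace_eq_sum_embeddings (K := ℚ) (L := K) ℂ (x := x))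
  have h0 : (algebraMap ℚ ℂ (Algebra.trace ℚ K x)).re = ((Algebra.trace ℚ K x : ℚ) : ℝ) := by
    rw [eq_ratCast, Complex.ratCast_re]
  rw [h0, Complex.re_sum] at h1
  rw [h1, ← Fintype.sum_equiv (RingHom.equivRatAlgHom (R := K) (S := ℂ)) (fun f => (f x).re)
      (fun φ => (φ x).re) fun _ => by simp [RingHom.equivRatAlgHom_apply],
    ← Finset.sum_fiberwise Finset.univ InfinitePlace.mk (fun φ : K →+* ℂ => (φ x).re)]
  have h2 (w : InfinitePlace K) (φ : K →+* ℂ)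
      (hφ : φ ∈ (Finset.univ.filter fun φ : K →+* ℂ => InfinitePlace.mk φ = w)) :
      (φ x).re = (w.embedding x).re := by
    rw [Finset.mem_filter] at hφ
    have h3 : InfinitePlace.mk φ = InfinitePlace.mk w.embedding := by
      rw [hφ.2, InfinitePlace.mk_embedding]
    rcases InfinitePlace.mk_eq_iff.1 h3 with h | h
    · rw [h]
    · rw [← h, ComplexEmbedding.conjugate_coe_eq, Complex.conj_re]
  simp_rw [Finset.sum_congr rfl (h2 _), Finset.sum_const, InfinitePlace.card_filter_mk_eq]
  rw [← Fintype.sum_subtype_add_sum_subtype (fun w : InfinitePlace K => w.IsReal)]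
  unfold TrR
  congr 1
  · refine Finset.sum_congr (by congr) fun w _ => ?_
    rw [InfinitePlace.mult_isReal w, one_smul, mixedEmbedding.mixedEmbedding_apply_isReal]
    rw [← InfinitePlace.embedding_of_isReal_apply w.2, Complex.ofReal_re]
  · have e : ∀ w : InfinitePlace K, w.IsComplex ↔ ¬ w.IsReal := fun w =>
      InfinitePlace.not_isReal_iff_isComplex.symm
    refine Fintype.sum_equiv (Equiv.subtypeEquivRight e) _ _ fun w => ?_
    change _ = InfinitePlace.mult w.1 • (w.1.embedding x).re
    rw [InfinitePlace.mult_isComplex w, mixedEmbedding.mixedEmbedding_apply_isComplex]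
    simp

lemma fR_eq (x : RS K) : fR K x = (∏ v, Real.exp (-Real.pi * x.1 v ^ 2)) *
    ∏ v, Real.exp (-(2 * Real.pi) * ‖x.2 v‖ ^ 2) := by
  unfold fR fD structureMap
  congr 1
  · refine Finset.prod_congr rfl fun v _ => ?_
    have : ‖(Complex.ofRealHom (x.1 v))‖ ^ 2 = x.1 v ^ 2 := by simp
    exact congr_arg (fun u => Real.exp (-Real.pi * u)) this
  · refine Finset.prod_congr rfl fun v _ => ?_
    have : ‖(Quaternion.ofComplex (x.2 v))‖ = ‖x.2 v‖ := by
      rw [Quaternion.coe_ofComplex]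
      refine (sq_eq_sq₀ (norm_nonneg _) (norm_nonneg _)).1 ?_
      rw [sq ‖(↑(x.2 v) : Quaternion ℝ)‖, ← Quaternion.normSq_eq_norm_mul_self,
        Quaternion.normSq_def', ← Complex.normSq_eq_norm_sq, Complex.normSq_apply]
      simp [sq]
    exact congr_arg (fun u => Real.exp (-(2 * Real.pi) * u ^ 2)) this

lemma fR_pos (x : RS K) : 0 < fR K x := by
  rw [fR_eq]; positivity

lemma continuous_fR : Continuous (fR K) := by
  have : fR K = fun x : RS K => (∏ v, Real.exp (-Real.pi * x.1 v ^ 2)) *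
    ∏ v, Real.exp (-(2 * Real.pi) * ‖x.2 v‖ ^ 2) := funext (fR_eq K)
  rw [this]
  fun_prop

lemma fR_zero : fR K 0 = 1 := by
  simp [fR_eq]

/-- Gaussian decay of `g` in the sup norm of `K_ℝ`. -/
lemma fR_le (x : RS K) : fR K x ≤ Real.exp (-Real.pi * ‖x‖ ^ 2) := by
  have h1 : fR K x = Real.exp (-(Real.pi * ((∑ v, x.1 v ^ 2) + ∑ v, 2 * ‖x.2 v‖ ^ 2))) := by
    rw [fR_eq, ← Real.exp_sum, ← Real.exp_sum, ← Real.exp_add]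
    congr 1
    rw [mul_add, Finset.mul_sum, Finset.mul_sum, neg_add, ← Finset.sum_neg_distrib,
      ← Finset.sum_neg_distrib]
    congr 1 <;> refine Finset.sum_congr rfl fun v _ => by ring
  rw [h1]
  apply Real.exp_le_exp.2
  rw [neg_mul, neg_le_neg_iff]
  refine mul_le_mul_of_nonneg_left ?_ Real.pi_pos.le
  have hS1 : 0 ≤ ∑ v, x.1 v ^ 2 := Finset.sum_nonneg fun v _ => sq_nonneg _
  have hS2 : 0 ≤ ∑ v, 2 * ‖x.2 v‖ ^ 2 := Finset.sum_nonneg fun v _ => by positivity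
  set S := (∑ v, x.1 v ^ 2) + ∑ v, 2 * ‖x.2 v‖ ^ 2 with hS
  have : ‖x‖ ≤ Real.sqrt S := by
    rw [Prod.norm_def, max_le_iff, pi_norm_le_iff_of_nonneg (Real.sqrt_nonneg _),
      pi_norm_le_iff_of_nonneg (Real.sqrt_nonneg _)]
    refine ⟨fun v => Real.le_sqrt_of_sq_le ?_, fun v => Real.le_sqrt_of_sq_le ?_⟩
    · have := Finset.single_le_sum (f := fun v => x.1 v ^ 2) (fun v _ => sq_nonneg _)
        (Finset.mem_univ v)
      rw [Real.norm_eq_abs, sq_abs]; linarith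
    · have := Finset.single_le_sum (f := fun v => 2 * ‖x.2 v‖ ^ 2) (fun v _ => by positivity)
        (Finset.mem_univ v)
      nlinarith [sq_nonneg ‖x.2 v‖]
  calc ‖x‖ ^ 2 ≤ Real.sqrt S ^ 2 := by gcongr
    _ = S := Real.sq_sqrt (by positivity)

/-- The Gaussian `g` is its own Fourier transform for the trace pairing and the measure `measR`. -/
lemma fourier_fR (c : RS K) :
    ∫ x, Complex.exp (-(2 * Real.pi * Complex.I * (TrR K (x * c) : ℝ))) * (fR K x : ℂ) ∂(measR K)
      = fR K c := by
  have : Measure.IsAddHaarMeasure ((2 : ENNReal) • (volume : Measure ℂ)) :=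
    Measure.IsAddHaarMeasure.smul _ (by simp) (by simp)
  have hsplit : ∀ x : RS K,
      Complex.exp (-(2 * Real.pi * Complex.I * (TrR K (x * c) : ℝ))) * (fR K x : ℂ) =
      (∏ v, Complex.exp (-(Real.pi : ℂ) * ‖x.1 v‖ ^ 2 + (-2 * Real.pi * Complex.I) *
        (inner ℝ (c.1 v) (x.1 v) : ℝ))) *
      ∏ v, Complex.exp (-(2 * Real.pi : ℂ) * ‖x.2 v‖ ^ 2 + (-4 * Real.pi * Complex.I) *
        (inner ℝ ((starRingEnd ℂ) (c.2 v)) (x.2 v) : ℝ)) := by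
    intro x
    rw [fR_eq, TrR]
    push_cast
    simp only [← Complex.exp_sum]
    rw [← Complex.exp_add, ← Complex.exp_add, ← Complex.exp_add]
    congr 1
    simp only [Finset.sum_add_distrib, mul_add, Finset.mul_sum, ← Finset.sum_neg_distrib, neg_add]
    have i1 : ∀ v, ((inner ℝ (c.1 v) (x.1 v) : ℝ) : ℂ) = (x.1 v : ℂ) * c.1 v := by
      intro v; simp
    have i2 : ∀ v, ((inner ℝ ((starRingEnd ℂ) (c.2 v)) (x.2 v) : ℝ) : ℂ) =
        (((x.2 v * c.2 v).re : ℝ) : ℂ) := by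
      intro v
      congr 1
      rw [Complex.inner]
      simp
    have i3 : ∀ v, ((‖x.1 v‖ : ℝ) : ℂ) ^ 2 = (x.1 v : ℂ) ^ 2 := by
      intro v
      rw [← Complex.ofReal_pow, Real.norm_eq_abs, sq_abs, Complex.ofReal_pow]
    simp only [i1, i2, i3]
    have e1 : ∀ a b c d a' b' c' d' : ℂ, a = d' → b = b' → c = a' → d = c' →
        a + b + (c + d) = a' + d' + (c' + b') := by
      intros; subst_vars; ring
    refine e1 _ _ _ _ _ _ _ _ ?_ ?_ ?_ ?_
    · refine Finset.sum_congr rfl fun v _ => ?_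
      simp only [Prod.fst_mul, Pi.mul_apply]; push_cast; ring
    · refine Finset.sum_congr rfl fun v _ => ?_
      simp only [Prod.snd_mul, Pi.mul_apply]; ring
    · refine Finset.sum_congr rfl fun v _ => ?_
      ring
    · refine Finset.sum_congr rfl fun v _ => ?_
      ring
  simp_rw [hsplit]
  unfold measR
  rw [integral_prod_mul
    (f := fun x : {v : InfinitePlace K // v.IsReal} → ℝ =>
      ∏ v, Complex.exp (-(Real.pi : ℂ) * ‖x v‖ ^ 2 + (-2 * Real.pi * Complex.I) *
        (inner ℝ (c.1 v) (x v) : ℝ)))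
    (g := fun x : {v : InfinitePlace K // v.IsComplex} → ℂ =>
      ∏ v, Complex.exp (-(2 * Real.pi : ℂ) * ‖x v‖ ^ 2 + (-4 * Real.pi * Complex.I) *
        (inner ℝ ((starRingEnd ℂ) (c.2 v)) (x v) : ℝ)))]
  rw [integral_fintype_prod_eq_prod
    (fun v (y : ℝ) => Complex.exp (-(Real.pi : ℂ) * ‖y‖ ^ 2 + (-2 * Real.pi * Complex.I) *
        (inner ℝ (c.1 v) y : ℝ))),
    integral_fintype_prod_eq_prod
    (fun v (y : ℂ) => Complex.exp (-(2 * Real.pi : ℂ) * ‖y‖ ^ 2 + (-4 * Real.pi * Complex.I) *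
        (inner ℝ ((starRingEnd ℂ) (c.2 v)) y : ℝ)))]
  rw [fR_eq]
  push_cast
  have hpi : (Real.pi : ℂ) ≠ 0 := by exact_mod_cast Real.pi_ne_zero
  congr 1
  · refine Finset.prod_congr rfl fun v _ => ?_
    rw [GaussianFourier.integral_cexp_neg_mul_sq_norm_add (by simpa using Real.pi_pos)]
    rw [div_self hpi, Complex.one_cpow, one_mul]
    congr 1
    rw [Real.norm_eq_abs, ← Complex.ofReal_pow, sq_abs, Complex.ofReal_pow]
    field_simp
    rw [Complex.I_sq]; ring
  · refine Finset.prod_congr rfl fun v _ => ?_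
    rw [integral_smul_measure, GaussianFourier.integral_cexp_neg_mul_sq_norm_add
      (by simpa using Real.pi_pos)]
    rw [Complex.finrank_real_complex]
    have : ((2 : ℕ) : ℂ) / 2 = 1 := by norm_num
    rw [this, Complex.cpow_one]
    have h2 : (Real.pi : ℂ) / (2 * Real.pi) = 1 / 2 := by field_simp
    rw [h2, RCLike.norm_conj]
    have h3 : (-4 * Real.pi * Complex.I) ^ 2 * (‖c.2 v‖ : ℂ) ^ 2 / (4 * (2 * Real.pi)) =
      -(2 * Real.pi) * (‖c.2 v‖ : ℂ) ^ 2 := by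
      field_simp
      rw [Complex.I_sq]; ring
    rw [h3]
    simp

/-! ### Lattices of fractional ideals: covolume, change of variables, decay -/

lemma map_mul_measR {a : RS K} (ha : normR K a ≠ 0) :
    (measR K).map (fun x => a * x) = ENNReal.ofReal (normR K a)⁻¹ • measR K := by
  have hdet : (LinearMap.mulLeft ℝ a).det ≠ 0 := by
    rw [← abs_ne_zero, det_mulLeft]; exact ha
  have h1 := Measure.map_linearMap_addHaar_eq_smul_addHaar (measR K) hdet
  rw [abs_inv, det_mulLeft] at h1
  exact h1

lemma integral_measR_mul {a : RS K} (ha : normR K a ≠ 0) (F : RS K → ℂ) (hF : Continuous F) :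
    ∫ x, F (a * x) ∂(measR K) = ((normR K a)⁻¹ : ℝ) • ∫ x, F x ∂(measR K) := by
  have h := integral_map (μ := measR K) (φ := fun x => a * x) (f := F)
    (by fun_prop) (hF.aestronglyMeasurable)
  rw [← h, map_mul_measR K ha, integral_smul_measure, ENNReal.toReal_ofReal]
  exact inv_nonneg.2 (normR_nonneg K a)

/-- `V(A) = √d_K · N(A)`, the covolume of the lattice `A ⊆ K_ℝ`. -/
def covol (A : FractionalIdeal (𝓞 K)⁰ K) : ℝ :=
  Real.sqrt (dF K) * (FractionalIdeal.absNorm A : ℚ)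

lemma covol_pos {A : FractionalIdeal (𝓞 K)⁰ K} (hA : A ≠ 0) : 0 < covol K A := by
  unfold covol
  have h1 : 0 < (dF K : ℝ) := by
    have : NumberField.discr K ≠ 0 := NumberField.discr_ne_zero K
    exact_mod_cast Int.natAbs_pos.2 this
  have h2 : 0 < FractionalIdeal.absNorm A :=
    lt_of_le_of_ne (FractionalIdeal.absNorm_nonneg A)
      (Ne.symm (fun h => hA (FractionalIdeal.absNorm_eq_zero_iff.1 h)))
  have : (0 : ℝ) < (FractionalIdeal.absNorm A : ℚ) := by exact_mod_cast h2
  positivity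

/-- The covolume of the lattice `A ⊆ K_ℝ` for the normalisation `measR`, which absorbs the powers
of `2` in the covolume for Lebesgue measure. -/
lemma measR_fundamentalDomain (I : (FractionalIdeal (𝓞 K)⁰ K)ˣ) :
    measR K (ZSpan.fundamentalDomain (mixedEmbedding.fractionalIdealLatticeBasis K I)) =
      ENNReal.ofReal (covol K I) := by
  rw [measR_eq, Measure.smul_apply, smul_eq_mul]
  rw [mixedEmbedding.volume_fundamentalDomain_fractionalIdealLatticeBasis,
    mixedEmbedding.volume_fundamentalDomain_latticeBasis]
  have h2 : ((2 : ENNReal) ^ InfinitePlace.nrComplexPlaces K) *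
      (2 : ENNReal)⁻¹ ^ InfinitePlace.nrComplexPlaces K = 1 := by
    rw [← mul_pow, ENNReal.mul_inv_cancel (by simp) (by simp), one_pow]
  have h3 : ((NNReal.sqrt ‖NumberField.discr K‖₊ : NNReal) : ENNReal) =
      ENNReal.ofReal (Real.sqrt (dF K)) := by
    rw [← ENNReal.ofReal_coe_nnreal, Real.coe_sqrt, coe_nnnorm, Int.norm_eq_abs, dF,
      Nat.cast_natAbs, Int.cast_abs]
  rw [h3, covol, mul_comm (Real.sqrt _), ENNReal.ofReal_mul
    (by exact_mod_cast FractionalIdeal.absNorm_nonneg _)]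
  calc _ = (((2 : ENNReal) ^ InfinitePlace.nrComplexPlaces K) *
      (2 : ENNReal)⁻¹ ^ InfinitePlace.nrComplexPlaces K) *
        (ENNReal.ofReal ((FractionalIdeal.absNorm I.1 : ℚ) : ℝ) *
          ENNReal.ofReal (Real.sqrt (dF K))) := by ring
    _ = _ := by rw [h2, one_mul]

/-- Change of variables for the coordinates in a lattice basis. -/
lemma integral_basis {ι : Type*} [Fintype ι] (b : Module.Basis ι ℝ (RS K)) {V : ℝ} (hV : 0 < V)
    (hb : measR K (ZSpan.fundamentalDomain b) = ENNReal.ofReal V) (F : RS K → ℂ)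
    (hF : Continuous F) :
    ∫ x : ι → ℝ, F (b.equivFun.symm x) = (V⁻¹ : ℝ) • ∫ y, F y ∂(measR K) := by
  classical
  let e : (ι → ℝ) ≃L[ℝ] RS K := b.equivFun.symm.toContinuousLinearEquiv
  have h1 : Measure.IsAddHaarMeasure ((volume : Measure (ι → ℝ)).map e) :=
    e.toContinuousAddEquiv.isAddHaarMeasure_map _
  have h2 := Measure.isAddLeftInvariant_eq_smul ((volume : Measure (ι → ℝ)).map e) (measR K)
  set c := Measure.addHaarScalarFactor ((volume : Measure (ι → ℝ)).map e) (measR K) with hc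
  have h3 : e ⁻¹' (ZSpan.fundamentalDomain b) = Set.pi Set.univ fun _ : ι => Set.Ico (0 : ℝ) 1 := by
    ext x
    have : b.repr (e x) = b.equivFun (b.equivFun.symm x) := rfl
    simp only [Set.mem_preimage, ZSpan.mem_fundamentalDomain, Set.mem_pi, Set.mem_univ,
      forall_true_left]
    refine forall_congr' fun i => ?_
    have h : b.repr (e x) i = x i := by
      change b.equivFun (b.equivFun.symm x) i = x i
      rw [LinearEquiv.apply_symm_apply]
    rw [h]
  have h4 : (volume : Measure (ι → ℝ)).map e (ZSpan.fundamentalDomain b) = 1 := by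
    rw [Measure.map_apply e.continuous.measurable (ZSpan.fundamentalDomain_measurableSet b), h3,
      volume_pi, Measure.pi_pi]
    simp
  have h5 : (c : ENNReal) * ENNReal.ofReal V = 1 := by
    rw [← hb, ← h4]
    conv_rhs => rw [h2]
    rfl
  have h6 : (c : ℝ) * V = 1 := by
    have := congr_arg ENNReal.toReal h5
    rwa [ENNReal.toReal_mul, ENNReal.toReal_ofReal hV.le, ENNReal.toReal_one] at this
  have h7 : (c : ℝ) = V⁻¹ := eq_inv_of_mul_eq_one_left h6
  have h := integral_map (μ := volume) (φ := e) (f := F)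
    e.continuous.measurable.aemeasurable (hF.aestronglyMeasurable)
  change ∫ x : ι → ℝ, F (e x) = _
  rw [← h, h2, integral_smul_nnreal_measure, ← h7]
  rfl

/-- Polynomial decay of the Gaussian along any injective linear parametrisation. -/
lemma fR_decay {E : Type*} [NormedAddCommGroup E] [NormedSpace ℝ E] [FiniteDimensional ℝ E]
    (L : E →ₗ[ℝ] RS K) (hL : Function.Injective L)
    (r : ℝ) : ∃ C : ℝ, ∀ x, fR K (L x) ≤ C * (1 + ‖x‖) ^ (-r) := by
  obtain ⟨k, hk, hkL⟩ := L.exists_antilipschitzWith (LinearMap.ker_eq_bot.2 hL)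
  have hk' : ∀ x, ‖x‖ ≤ k * ‖L x‖ := fun x => by
    have := hkL.le_mul_dist x 0
    simpa using this
  have hkp : (0 : ℝ) < k := by exact_mod_cast hk
  set c : ℝ := Real.pi / k ^ 2 with hc
  have hcp : 0 < c := by positivity
  have h1 : Filter.Tendsto (fun u : ℝ => (1 + u) ^ r * Real.exp (-c * u ^ 2)) Filter.atTop
      (nhds 0) := by
    have e1 := tendsto_rpow_mul_exp_neg_mul_atTop_nhds_zero r c hcp
    have e2 := (e1.comp (Filter.tendsto_atTop_add_const_left _ (1 : ℝ) Filter.tendsto_id)).const_mul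
      (Real.exp (2 * c))
    rw [mul_zero] at e2
    refine squeeze_zero' ?_ ?_ e2
    · filter_upwards [Filter.eventually_ge_atTop 0] with u hu
      positivity
    · filter_upwards [Filter.eventually_ge_atTop 0] with u hu
      have : Real.exp (-c * u ^ 2) ≤ Real.exp (2 * c) * Real.exp (-c * (1 + u)) := by
        rw [← Real.exp_add]
        apply Real.exp_le_exp.2
        nlinarith [mul_nonneg hcp.le (sq_nonneg (u - 1 / 2))]
      simp only [Function.comp_apply, id]
      calc (1 + u) ^ r * Real.exp (-c * u ^ 2)
          ≤ (1 + u) ^ r * (Real.exp (2 * c) * Real.exp (-c * (1 + u))) := by gcongr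
        _ = _ := by ring
  have hcont : ContinuousOn (fun u : ℝ => (1 + u) ^ r * Real.exp (-c * u ^ 2)) (Set.Ici 0) := by
    refine ContinuousOn.mul (ContinuousOn.rpow_const (by fun_prop) fun u hu => Or.inl ?_)
      (by fun_prop)
    have : (0 : ℝ) ≤ u := hu
    positivity
  obtain ⟨C, hC⟩ : ∃ C, ∀ u : ℝ, 0 ≤ u → (1 + u) ^ r * Real.exp (-c * u ^ 2) ≤ C := by
    obtain ⟨M, hM⟩ := Filter.eventually_atTop.1 (h1.eventually (gt_mem_nhds zero_lt_one))
    obtain ⟨C, hC⟩ := (isCompact_Icc (a := (0 : ℝ)) (b := max M 0)).bddAbove_image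
      (hcont.mono fun u hu => hu.1)
    refine ⟨max C 1, fun u hu => ?_⟩
    by_cases h : u ≤ max M 0
    · exact (hC ⟨u, ⟨hu, h⟩, rfl⟩).trans (le_max_left _ _)
    · exact (hM u ((le_max_left _ _).trans (not_le.1 h).le)).le.trans (le_max_right _ _)
  refine ⟨C, fun x => ?_⟩
  have hx : (0 : ℝ) < 1 + ‖x‖ := by positivity
  have h2 : fR K (L x) ≤ Real.exp (-c * ‖x‖ ^ 2) := by
    refine (fR_le K _).trans (Real.exp_le_exp.2 ?_)
    have h3 : ‖x‖ ^ 2 ≤ k ^ 2 * ‖L x‖ ^ 2 := by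
      rw [← mul_pow]; exact pow_le_pow_left₀ (norm_nonneg _) (hk' x) 2
    have h4 : c * ‖x‖ ^ 2 ≤ Real.pi * ‖L x‖ ^ 2 := by
      rw [hc, div_mul_eq_mul_div, div_le_iff₀ (by positivity)]
      nlinarith [Real.pi_pos]
    linarith
  rw [Real.rpow_neg hx.le, ← div_eq_mul_inv, le_div_iff₀ (by positivity), mul_comm]
  exact (mul_le_mul_of_nonneg_left h2 (by positivity)).trans (hC _ (norm_nonneg _))

/-! ### The theta transformation formula -/

/-- Integral coordinates with respect to a `ℚ`-basis, on the `ℤ`-span of that basis. -/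
def spanEquiv {ι : Type*} [Fintype ι] (b : Module.Basis ι ℚ K) (S : Set K)
    (hS : ∀ x, x ∈ Submodule.span ℤ (Set.range b) ↔ x ∈ S) : (ι → ℤ) ≃ S :=
  ((b.restrictScalars ℤ).equivFun.symm.toEquiv).trans (Equiv.subtypeEquivRight hS)

lemma spanEquiv_apply {ι : Type*} [Fintype ι] (b : Module.Basis ι ℚ K) (S : Set K)
    (hS : ∀ x, x ∈ Submodule.span ℤ (Set.range b) ↔ x ∈ S) (m : ι → ℤ) :
    (spanEquiv K b S hS m : K) = ∑ i, m i • b i := by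
  have : (spanEquiv K b S hS m : K) = ((b.restrictScalars ℤ).equivFun.symm m : K) := rfl
  rw [this, Module.Basis.equivFun_symm_apply]
  push_cast
  exact Finset.sum_congr rfl fun i _ => by rw [Module.Basis.restrictScalars_apply]

/-- The trace-dual basis of a `ℤ`-basis of `A` is a `ℤ`-basis of the dual ideal. -/
lemma mem_span_traceDual (I : (FractionalIdeal (𝓞 K)⁰ K)ˣ) (x : K) :
    x ∈ Submodule.span ℤ (Set.range (basisOfFractionalIdeal K I).traceDual) ↔
      x ∈ ((FractionalIdeal.dual ℤ ℚ (I : FractionalIdeal (𝓞 K)⁰ K) :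
        FractionalIdeal (𝓞 K)⁰ K) : Set K) := by
  rw [Module.Basis.mem_span_iff_repr_mem]
  simp only [Module.Basis.traceDual_repr_apply]
  change _ ↔ x ∈ FractionalIdeal.dual ℤ ℚ (I : FractionalIdeal (𝓞 K)⁰ K)
  rw [FractionalIdeal.mem_dual I.ne_zero]
  constructor
  · intro h a ha
    have ha' : a ∈ Submodule.span ℤ (Set.range (basisOfFractionalIdeal K I)) :=
      (mem_span_basisOfFractionalIdeal K).2 ha
    clear ha
    induction ha' using Submodule.span_induction with
    | mem a h' => obtain ⟨i, rfl⟩ := h'; exact h i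
    | zero => rw [map_zero]; exact zero_mem _
    | add a b _ _ ha hb => rw [map_add]; exact add_mem ha hb
    | smul n a _ ha => rw [map_zsmul]; exact zsmul_mem ha n
  · intro h i
    exact h _ ((mem_span_basisOfFractionalIdeal K).1 (Submodule.subset_span ⟨i, rfl⟩))

lemma continuous_TrR : Continuous (TrR K) := by
  unfold TrR; fun_prop

/-- `TrR` as a linear map. -/
def TrL : RS K →ₗ[ℝ] ℝ where
  toFun := TrR K
  map_add' := TrR_add K
  map_smul' c x := by
    simp [TrR, mul_add, Finset.mul_sum]
    refine Finset.sum_congr rfl fun v _ => by ring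

lemma mulLeft_injective {t : RS K} (ht : normR K t ≠ 0) :
    Function.Injective (LinearMap.mulLeft ℝ t) := by
  intro x y h
  change t * x = t * y at h
  have := congr_arg (fun z => t⁻¹ * z) h
  simpa only [← mul_assoc, mul_comm t⁻¹ t, mul_inv_RS K ht, one_mul] using this

/-- The two hypotheses of Poisson summation for `x ↦ g(t · Σ xᵢ bᵢ)`: polynomial decay, and
summability over integral points. -/
lemma fR_lattice {ι : Type*} [Fintype ι] (b : Module.Basis ι ℝ (RS K)) {t : RS K}
    (ht : normR K t ≠ 0) :
    (∃ C : ℝ, ∀ x, fR K (t * b.equivFun.symm x) ≤ C * (1 + ‖x‖) ^ (-(Fintype.card ι + 1 : ℝ))) ∧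
    Summable fun m : ι → ℤ => fR K (t * b.equivFun.symm fun i => (m i : ℝ)) := by
  obtain ⟨C, hC⟩ := fR_decay K ((LinearMap.mulLeft ℝ t).comp b.equivFun.symm.toLinearMap)
    ((mulLeft_injective K ht).comp b.equivFun.symm.injective) (Fintype.card ι + 1 : ℝ)
  refine ⟨⟨C, hC⟩, ?_⟩
  refine Summable.of_nonneg_of_le (fun m => (fR_pos K _).le) (fun m => hC _) ?_
  exact (summable_int_decay (lt_add_one _)).mul_left C

/-- The lattice points of `A` in terms of the coordinates of a lattice basis. -/
lemma lattice_point (I : (FractionalIdeal (𝓞 K)⁰ K)ˣ) (m) :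
    (mixedEmbedding.fractionalIdealLatticeBasis K I).equivFun.symm (fun i => (m i : ℝ)) =
    mixedEmbedding K (spanEquiv K (basisOfFractionalIdeal K I) _
      (fun _ => mem_span_basisOfFractionalIdeal K) m) := by
  rw [spanEquiv_apply, Module.Basis.equivFun_symm_apply, map_sum]
  refine Finset.sum_congr rfl fun i _ => ?_
  rw [mixedEmbedding.fractionalIdealLatticeBasis_apply, map_zsmul, Int.cast_smul_eq_zsmul]

lemma summable_fR (I : (FractionalIdeal (𝓞 K)⁰ K)ˣ) {t : RS K} (ht : normR K t ≠ 0) :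
    Summable fun α : ((I : FractionalIdeal (𝓞 K)⁰ K) : Set K) =>
      fR K (t * mixedEmbedding K α) := by
  rw [← (spanEquiv K (basisOfFractionalIdeal K I) _
      (fun _ => mem_span_basisOfFractionalIdeal K)).summable_iff]
  refine (fR_lattice K (mixedEmbedding.fractionalIdealLatticeBasis K I) ht).2.congr fun m => ?_
  rw [lattice_point]; rfl

/-- The unit of the group of fractional ideals given by the dual ideal. -/
def dualUnit (I : (FractionalIdeal (𝓞 K)⁰ K)ˣ) : (FractionalIdeal (𝓞 K)⁰ K)ˣ :=
  Units.mk0 (FractionalIdeal.dual ℤ ℚ (I : FractionalIdeal (𝓞 K)⁰ K))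
    (FractionalIdeal.dual_ne_zero ℤ ℚ I.ne_zero)

/-- Poisson summation for the lattice `tA`: the transformation formula of the theta series. -/
theorem theta_real (I : (FractionalIdeal (𝓞 K)⁰ K)ˣ) {t : RS K} (ht : normR K t ≠ 0) :
    covol K I * normR K t * ∑' α : ((I : FractionalIdeal (𝓞 K)⁰ K) : Set K),
      fR K (t * mixedEmbedding K α) =
    ∑' β : ((dualUnit K I : FractionalIdeal (𝓞 K)⁰ K) : Set K),
      fR K (t⁻¹ * mixedEmbedding K β) := by
  classical
  set b := mixedEmbedding.fractionalIdealLatticeBasis K I with hb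
  set q := basisOfFractionalIdeal K I with hq
  -- `E1`, `E2`: coordinates of `A` in a `ℤ`-basis, and of `A*` in the trace-dual basis
  let E1 := spanEquiv K q _ (fun _ => mem_span_basisOfFractionalIdeal K)
  let E2 := spanEquiv K q.traceDual _ (mem_span_traceDual K I)
  have hti : normR K t⁻¹ ≠ 0 := by rw [normR_inv]; exact inv_ne_zero ht
  have htt : t * t⁻¹ = 1 := mul_inv_RS K ht
  have hV := covol_pos K I.ne_zero
  obtain ⟨C, hC⟩ := (fR_lattice K b ht).1
  let G : (Module.Free.ChooseBasisIndex ℤ I → ℝ) → ℂ := fun x => (fR K (t * b.equivFun.symm x) : ℂ)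
  have hlin : Continuous b.equivFun.symm :=
    LinearMap.continuous_of_finiteDimensional b.equivFun.symm.toLinearMap
  have hGc : Continuous G :=
    Complex.continuous_ofReal.comp ((continuous_fR K).comp (continuous_const.mul hlin))
  have hF : ∀ m : Module.Free.ChooseBasisIndex ℤ I → ℤ,
      ∫ x : Module.Free.ChooseBasisIndex ℤ I → ℝ,
        Complex.exp (-(2*Real.pi*Complex.I * ((∑ i, (m i:ℝ) * x i : ℝ) : ℂ))) * G x =
      (((covol K I * normR K t)⁻¹ * fR K (t⁻¹ * mixedEmbedding K (E2 m)) : ℝ) : ℂ) := by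
    intro m
    -- the Fourier variable `m` pairs with `x` through the trace form
    have hpair : ∀ x : Module.Free.ChooseBasisIndex ℤ I → ℝ, (∑ i, (m i:ℝ) * x i) =
        TrR K (b.equivFun.symm x * mixedEmbedding K (E2 m)) := by
      intro x
      rw [Module.Basis.equivFun_symm_apply, Finset.sum_mul]
      change _ = TrL K _
      rw [map_sum]
      refine Finset.sum_congr rfl fun i _ => ?_
      rw [smul_mul_assoc, map_smul, smul_eq_mul, mul_comm, hb,
        mixedEmbedding.fractionalIdealLatticeBasis_apply, ← map_mul]
      change _ = x i * TrR K _
      rw [TrR_mixedEmbedding, spanEquiv_apply, Finset.mul_sum, map_sum]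
      simp only [mul_smul_comm, map_zsmul, Module.Basis.trace_mul_traceDual, ← hq]
      simp
    let F' : RS K → ℂ := fun y => Complex.exp (-(2*Real.pi*Complex.I *
      ((TrR K (y * (t⁻¹ * mixedEmbedding K (E2 m))) : ℝ) : ℂ))) * (fR K y : ℂ)
    have hF'c : Continuous F' := by
      have h1 := continuous_TrR K
      have h2 := continuous_fR K
      fun_prop
    have h1 := integral_basis K b hV (measR_fundamentalDomain K I) (fun y => F' (t * y))
      (hF'c.comp (continuous_const.mul continuous_id))
    rw [integral_measR_mul K ht F' hF'c, fourier_fR] at h1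
    have h2 : ∀ x : Module.Free.ChooseBasisIndex ℤ I → ℝ,
        Complex.exp (-(2*Real.pi*Complex.I * ((∑ i, (m i:ℝ) * x i : ℝ) : ℂ))) * G x =
        F' (t * b.equivFun.symm x) := by
      intro x
      rw [hpair]
      have : t * b.equivFun.symm x * (t⁻¹ * mixedEmbedding K (E2 m)) =
          b.equivFun.symm x * mixedEmbedding K (E2 m) := by
        calc _ = (t * t⁻¹) * (b.equivFun.symm x * mixedEmbedding K (E2 m)) := by ring
          _ = _ := by rw [htt, one_mul]
      simp only [F', this]
      rfl
    simp_rw [h2]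
    rw [h1, mul_inv]
    simp only [Complex.real_smul]
    push_cast
    ring
  have hs2 : Summable fun m => fR K (t⁻¹ * mixedEmbedding K (E2 m)) :=
    (E2.summable_iff (f := fun β : ((dualUnit K I : FractionalIdeal (𝓞 K)⁰ K) : Set K) =>
      fR K (t⁻¹ * mixedEmbedding K β))).2 (summable_fR K (dualUnit K I) hti)
  have key := poisson_pi hGc (lt_add_one _) (C := C) (fun x => by
      have : ‖G x‖ = fR K (t * b.equivFun.symm x) := by
        rw [Complex.norm_real, Real.norm_of_nonneg (fR_pos K _).le]
      rw [this]; exact hC x)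
    (by
      simp_rw [hF]
      exact Complex.ofRealCLM.summable (hs2.mul_left _))
  simp_rw [hF] at key
  have h3 : ∀ n : Module.Free.ChooseBasisIndex ℤ I → ℤ, G (fun i => (n i : ℝ)) =
      ((fR K (t * mixedEmbedding K (E1 n)) : ℝ) : ℂ) := by
    intro n
    simp only [G, hb, lattice_point]
    rfl
  simp_rw [h3] at key
  rw [← Complex.ofReal_tsum, ← Complex.ofReal_tsum, Complex.ofReal_inj, tsum_mul_left] at key
  have e1 := E1.tsum_eq (fun α : ((I : FractionalIdeal (𝓞 K)⁰ K) : Set K) =>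
      fR K (t * mixedEmbedding K α))
  have e2 := E2.tsum_eq (fun β : ((dualUnit K I : FractionalIdeal (𝓞 K)⁰ K) : Set K) =>
      fR K (t⁻¹ * mixedEmbedding K β))
  rw [← e1, key, ← mul_assoc, mul_inv_cancel₀ (mul_ne_zero hV.ne' ht), one_mul]
  exact e2

/-- The theta series `Σ_{0 ≠ α ∈ A} g(tα)` of a fractional ideal, with the zero term removed. -/
def thE (A : FractionalIdeal (𝓞 K)⁰ K) (t : RS K) : ENNReal :=
  ∑' α : {α : K // α ∈ A ∧ α ≠ 0}, ENNReal.ofReal (fR K (t * mixedEmbedding K α))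

lemma one_add_thE (I : (FractionalIdeal (𝓞 K)⁰ K)ˣ) {t : RS K} (ht : normR K t ≠ 0) :
    1 + thE K I t = ENNReal.ofReal (∑' α : ((I : FractionalIdeal (𝓞 K)⁰ K) : Set K),
      fR K (t * mixedEmbedding K α)) := by
  classical
  rw [ENNReal.ofReal_tsum_of_nonneg (fun _ => (fR_pos K _).le) (summable_fR K I ht)]
  have h0 : (0 : K) ∈ ((I : FractionalIdeal (𝓞 K)⁰ K) : Set K) :=
    Submodule.zero_mem (I : FractionalIdeal (𝓞 K)⁰ K).1
  rw [tsum_subtype ((I : FractionalIdeal (𝓞 K)⁰ K) : Set K)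
    (fun α => ENNReal.ofReal (fR K (t * mixedEmbedding K α))), ENNReal.tsum_eq_add_tsum_ite 0]
  rw [Set.indicator_of_mem h0, map_zero, mul_zero, fR_zero, ENNReal.ofReal_one]
  congr 1
  unfold thE
  refine (tsum_subtype {α : K | α ∈ (I : FractionalIdeal (𝓞 K)⁰ K) ∧ α ≠ 0}
    (fun α => ENNReal.ofReal (fR K (t * mixedEmbedding K α)))).trans ?_
  refine tsum_congr fun α => ?_
  by_cases h : α = 0
  · simp [h]
  · simp [h, Set.indicator_apply]

/-- The theta formula in `[0, ∞]`, with the zero terms split off. -/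
theorem theta (I : (FractionalIdeal (𝓞 K)⁰ K)ˣ) {t : RS K} (ht : normR K t ≠ 0) :
    ENNReal.ofReal (covol K I * normR K t) * (1 + thE K I t) = 1 + thE K (dualUnit K I) t⁻¹ := by
  have hti : normR K t⁻¹ ≠ 0 := by rw [normR_inv]; exact inv_ne_zero ht
  rw [one_add_thE K I ht, one_add_thE K (dualUnit K I) hti, ← theta_real K I ht,
    ← ENNReal.ofReal_mul (mul_nonneg (covol_pos K I.ne_zero).le (normR_nonneg K t))]

lemma thE_lt_top (I : (FractionalIdeal (𝓞 K)⁰ K)ˣ) {t : RS K} (ht : normR K t ≠ 0) :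
    thE K I t < ⊤ := by
  refine lt_of_le_of_lt le_add_self (b := 1 + thE K I t) ?_
  rw [one_add_thE K I ht]
  exact ENNReal.ofReal_lt_top

/-! ### The fundamental cone for the unit group -/

section Cone

open scoped Pointwise

/-- The cone `X ⊆ K_ℝ^×`, a fundamental domain for the action of the units up to roots of
unity. -/
def cone : Set (RS K) := mixedEmbedding.fundamentalCone K

lemma measurableSet_cone : MeasurableSet (cone K) :=
  mixedEmbedding.measurableSet_fundamentalCone K

lemma normR_pos_of_mem_cone {x : RS K} (hx : x ∈ cone K) : 0 < normR K x := by
  rw [normR_eq]; exact mixedEmbedding.fundamentalCone.norm_pos_of_mem hx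

/-- The constant `c` with `measR (X ∩ {N ≤ r}) = c r`. -/
def coneConst : ENNReal := measR K (cone K ∩ {x | normR K x ≤ 1})

lemma cone_inter_eq : cone K ∩ {x | normR K x ≤ 1} =
    (mixedEmbedding.fundamentalCone.normLeOne K : Set (RS K)) := by
  ext x
  simp only [Set.mem_inter_iff, Set.mem_ofPred_eq, normR_eq]
  rfl

lemma coneConst_ne_top : coneConst K ≠ ⊤ := by
  unfold coneConst
  rw [cone_inter_eq]
  exact (mixedEmbedding.fundamentalCone.isBounded_normLeOne K).measure_lt_top.ne

lemma coneConst_ne_zero : coneConst K ≠ 0 := by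
  unfold coneConst
  rw [cone_inter_eq, measR_eq, Measure.smul_apply, smul_eq_mul]
  refine mul_ne_zero (by simp) ?_
  have h : (volume : Measure (RS K)) (mixedEmbedding.fundamentalCone.normLeOne K) = _ :=
    mixedEmbedding.fundamentalCone.volume_normLeOne K
  rw [h]
  refine mul_ne_zero (mul_ne_zero (by simp) (by simp [NNReal.pi_ne_zero])) ?_
  simpa using Units.regulator_pos K

/-- The cone is stable under positive scalars, and `{N ≤ r}` scales by `r^(1/n)`. -/
lemma measR_cone_le {r : ℝ} (hr : 0 < r) :
    measR K (cone K ∩ {x | normR K x ≤ r}) = ENNReal.ofReal r * coneConst K := by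
  have hn : Module.finrank ℚ K ≠ 0 := Module.finrank_pos.ne'
  set c : ℝ := r ^ ((Module.finrank ℚ K : ℝ)⁻¹) with hc
  have hcp : 0 < c := Real.rpow_pos_of_pos hr _
  have hcr : c ^ Module.finrank ℚ K = r := Real.rpow_inv_natCast_pow hr.le hn
  have hset : cone K ∩ {x | normR K x ≤ r} = c • (cone K ∩ {x | normR K x ≤ 1}) := by
    ext x
    rw [Set.mem_smul_set_iff_inv_smul_mem₀ hcp.ne']
    simp only [Set.mem_inter_iff, Set.mem_ofPred_eq, normR_eq]
    have h1 : c⁻¹ • x ∈ cone K ↔ x ∈ cone K :=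
      mixedEmbedding.fundamentalCone.smul_mem_iff_mem (inv_ne_zero hcp.ne')
    have h2 : mixedEmbedding.norm (c⁻¹ • x) = r⁻¹ * mixedEmbedding.norm x := by
      have := mixedEmbedding.norm_smul c⁻¹ (x : mixedEmbedding.mixedSpace K)
      rw [abs_of_pos (inv_pos.2 hcp), inv_pow, hcr] at this
      exact this
    rw [h1, h2, inv_mul_le_iff₀ hr, mul_one]
  have hfr : Module.finrank ℝ (RS K) = Module.finrank ℚ K := mixedEmbedding.finrank K
  rw [hset, Measure.addHaar_smul, hfr, hcr, abs_of_pos hr, coneConst]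

/-- The norm pushes the Haar measure on the cone forward to `c dy` on `(0, ∞)`. -/
lemma map_normR_cone : ((measR K).restrict (cone K)).map (normR K) =
    coneConst K • (volume : Measure ℝ).restrict (Set.Ioi 0) := by
  have hm : Measurable (normR K) := (continuous_normR K).measurable
  have key : ∀ r : ℝ, ((measR K).restrict (cone K)).map (normR K) (Set.Iic r) =
      ENNReal.ofReal r * coneConst K := by
    intro r
    rw [Measure.map_apply hm measurableSet_Iic, Measure.restrict_apply (hm measurableSet_Iic),
      Set.inter_comm]
    rcases lt_or_ge 0 r with hr | hr
    · exact measR_cone_le K hr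
    · rw [ENNReal.ofReal_of_nonpos hr, zero_mul]
      convert measure_empty (μ := measR K)
      ext x
      simp only [Set.mem_inter_iff, Set.mem_preimage, Set.mem_Iic, Set.mem_empty_iff_false,
        iff_false, not_and, not_le]
      exact fun hx => lt_of_le_of_lt hr (normR_pos_of_mem_cone K hx)
  have hI : ∀ a b : ℝ, a ≤ b → ((measR K).restrict (cone K)).map (normR K) (Set.Ioc a b) =
      ENNReal.ofReal b * coneConst K - ENNReal.ofReal a * coneConst K := by
    intro a b hab
    rw [← Set.Iic_sdiff_Iic, measure_sdiff (Set.Iic_subset_Iic.2 hab)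
      measurableSet_Iic.nullMeasurableSet, key, key]
    rw [key]
    exact ENNReal.mul_ne_top ENNReal.ofReal_ne_top (coneConst_ne_top K)
  refine Measure.ext_of_Ioc' _ _ (fun a b hab => ?_) (fun a b hab => ?_)
  · rw [hI a b hab.le]
    exact ne_top_of_le_ne_top (ENNReal.mul_ne_top ENNReal.ofReal_ne_top (coneConst_ne_top K))
      tsub_le_self
  · rw [hI a b hab.le, Measure.smul_apply, smul_eq_mul, Measure.restrict_apply measurableSet_Ioc]
    have : Set.Ioc a b ∩ Set.Ioi 0 = Set.Ioc (max a 0) b := by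
      ext x; simp only [Set.mem_inter_iff, Set.mem_Ioc, Set.mem_Ioi, max_lt_iff]; tauto
    rw [this, Real.volume_Ioc, ← ENNReal.sub_mul (fun _ _ => coneConst_ne_top K), mul_comm,
      ENNReal.ofReal_sub _ (le_max_right _ _), ENNReal.ofReal_max, ENNReal.ofReal_zero,
      max_eq_left (zero_le)]

/-- Integration over the cone of a function of the norm against `d^×t`: the measure `d^×t` is
pushed forward to `c dy/y`. -/
lemma lintegral_cone (k : ℝ → ENNReal) (hk : Measurable k) :
    ∫⁻ x in cone K, k (normR K x) ∂(measT K) =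
      coneConst K * ∫⁻ y in Set.Ioi 0, ENNReal.ofReal (1 / y) * k y := by
  have hm : Measurable (normR K) := (continuous_normR K).measurable
  have hk' : Measurable fun y : ℝ => ENNReal.ofReal (1 / y) * k y := by fun_prop
  rw [← smul_eq_mul, ← lintegral_smul_measure, ← map_normR_cone, lintegral_map hk' hm,
    ← lintegral_indicator (measurableSet_cone K), lintegral_measT,
    ← lintegral_indicator (measurableSet_cone K)]
  refine lintegral_congr fun x => ?_
  by_cases hx : x ∈ cone K <;> simp [hx]

/-- The image of a unit in `K_ℝ`. -/
def uE (u : (𝓞 K)ˣ) : RS K := mixedEmbedding K ((u : 𝓞 K) : K)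

lemma uE_mul (u v : (𝓞 K)ˣ) : uE K (u * v) = uE K u * uE K v := by
  simp [uE]

lemma uE_one : uE K 1 = 1 := by simp [uE]

lemma normR_uE (u : (𝓞 K)ˣ) : normR K (uE K u) = 1 := by
  rw [normR_eq]; exact mixedEmbedding.norm_unit u

lemma uE_inv (u : (𝓞 K)ˣ) : uE K u⁻¹ = (uE K u)⁻¹ := by
  have h1 : uE K u * uE K u⁻¹ = 1 := by rw [← uE_mul, mul_inv_cancel, uE_one]
  have h2 : uE K u * (uE K u)⁻¹ = 1 :=
    mul_inv_RS K (by rw [normR_uE]; exact one_ne_zero)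
  calc uE K u⁻¹ = (uE K u * (uE K u)⁻¹) * uE K u⁻¹ := by rw [h2, one_mul]
    _ = (uE K u * uE K u⁻¹) * (uE K u)⁻¹ := by ring
    _ = _ := by rw [h1, one_mul]

/-- Every `t ∈ K_ℝ^×` lies in exactly `w` unit translates of the cone. -/
lemma tsum_indicator_cone {t : RS K} (ht : normR K t ≠ 0) :
    ∑' u : (𝓞 K)ˣ, (cone K).indicator (1 : RS K → ENNReal) (uE K u * t) =
      (Units.torsionOrder K : ENNReal) := by
  classical
  obtain ⟨v, hv⟩ : ∃ v : (𝓞 K)ˣ, uE K v * t ∈ cone K :=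
    mixedEmbedding.fundamentalCone.exists_unit_smul_mem (x := (t : mixedEmbedding.mixedSpace K))
      (by rwa [normR_eq] at ht)
  rw [← (Equiv.mulRight v).tsum_eq]
  have : ∀ u : (𝓞 K)ˣ, (cone K).indicator (1 : RS K → ENNReal) (uE K (Equiv.mulRight v u) * t) =
      Set.indicator (Units.torsion K : Set (𝓞 K)ˣ) (fun _ => (1 : ENNReal)) u := by
    intro u
    have h : uE K u * (uE K v * t) ∈ cone K ↔ u ∈ Units.torsion K :=
      mixedEmbedding.fundamentalCone.unit_smul_mem_iff_mem_torsion hv u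
    rw [Equiv.coe_mulRight, uE_mul, mul_assoc]
    by_cases hu : u ∈ Units.torsion K
    · rw [Set.indicator_of_mem (h.2 hu), Set.indicator_of_mem (by exact hu)]; rfl
    · rw [Set.indicator_of_notMem (fun h' => hu (h.1 h')), Set.indicator_of_notMem (by exact hu)]
  simp_rw [this]
  rw [← tsum_subtype]
  rw [ENNReal.tsum_const, mul_one]
  rw [Units.torsionOrder]
  simp [ENat.card_eq_coe_natCard]

lemma measurable_mul_left_RS (a : RS K) : Measurable fun x : RS K => a * x :=
  (continuous_const.mul continuous_id).measurable

/-- Unfolding: the integral over `K_ℝ^×` is the integral over the cone of the sum over units. -/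
lemma lintegral_unfold (h : RS K → ENNReal) (hh : Measurable h) :
    (Units.torsionOrder K : ENNReal) * ∫⁻ t, h t ∂(measT K) =
      ∫⁻ t in cone K, ∑' u : (𝓞 K)ˣ, h (uE K u * t) ∂(measT K) := by
  have hcount : Countable (𝓞 K)ˣ := by
    have : Countable K := (Module.finBasis ℚ K).equivFun.injective.countable
    have h1 : Function.Injective (fun u : (𝓞 K)ˣ => ((u : 𝓞 K) : K)) := fun u v huv => by
      apply Units.ext
      exact RingOfIntegers.coe_injective huv
    exact h1.countable
  have hc := measurableSet_cone K
  have hi : Measurable ((cone K).indicator (1 : RS K → ENNReal)) := measurable_one.indicator hc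
  rw [← lintegral_const_mul _ hh]
  calc ∫⁻ t, (Units.torsionOrder K : ENNReal) * h t ∂(measT K)
      = ∫⁻ t, ∑' u : (𝓞 K)ˣ, (cone K).indicator (1 : RS K → ENNReal) (uE K u * t) * h t
          ∂(measT K) := by
        refine lintegral_congr_ae ?_
        filter_upwards [ae_normR_ne_zero K] with t ht
        rw [ENNReal.tsum_mul_right, tsum_indicator_cone K ht]
    _ = ∑' u : (𝓞 K)ˣ, ∫⁻ t, (cone K).indicator (1 : RS K → ENNReal) (uE K u * t) * h t
          ∂(measT K) :=
        lintegral_tsum fun u =>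
          ((hi.comp (measurable_mul_left_RS K _)).mul hh).aemeasurable
    _ = ∑' u : (𝓞 K)ˣ, ∫⁻ t, (cone K).indicator (1 : RS K → ENNReal) t * h (uE K u⁻¹ * t)
          ∂(measT K) := by
        refine tsum_congr fun u => ?_
        have hu : normR K (uE K u) ≠ 0 := by rw [normR_uE]; exact one_ne_zero
        rw [← lintegral_measT_mul K hu
          (fun t => (cone K).indicator (1 : RS K → ENNReal) t * h (uE K u⁻¹ * t))
          (hi.mul (hh.comp (measurable_mul_left_RS K _)))]
        refine lintegral_congr fun t => ?_
        rw [← mul_assoc (uE K u⁻¹), ← uE_mul, inv_mul_cancel, uE_one, one_mul]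
    _ = ∑' u : (𝓞 K)ˣ, ∫⁻ t, (cone K).indicator (1 : RS K → ENNReal) t * h (uE K u * t)
          ∂(measT K) := (Equiv.inv (𝓞 K)ˣ).tsum_eq (fun u => ∫⁻ t,
            (cone K).indicator (1 : RS K → ENNReal) t * h (uE K u * t) ∂(measT K))
    _ = ∫⁻ t, (cone K).indicator (fun t => ∑' u : (𝓞 K)ˣ, h (uE K u * t)) t ∂(measT K) := by
        refine (lintegral_tsum fun u =>
          (hi.mul (hh.comp (measurable_mul_left_RS K _))).aemeasurable).symm.trans ?_
        refine lintegral_congr fun t => ?_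
        simp only [Pi.mul_apply, Function.comp_apply]
        rw [ENNReal.tsum_mul_left]
        by_cases ht : t ∈ cone K <;> simp [ht]
    _ = _ := lintegral_indicator hc _

lemma measurable_inv_RS : Measurable fun x : RS K => x⁻¹ := by
  refine Measurable.prodMk ?_ ?_
  · exact measurable_pi_lambda _ fun v => by
      have : Measurable fun x : RS K => x.1 v := by fun_prop
      exact this.inv
  · exact measurable_pi_lambda _ fun v => by
      have : Measurable fun x : RS K => x.2 v := by fun_prop
      exact this.inv

/-- The integral over the cone of a unit invariant function is unchanged under `t ↦ t⁻¹`. -/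
lemma lintegral_cone_inv (h : RS K → ENNReal) (hh : Measurable h)
    (hu : ∀ (u : (𝓞 K)ˣ) t, h (uE K u * t) = h t) :
    ∫⁻ t in cone K, h t⁻¹ ∂(measT K) = ∫⁻ t in cone K, h t ∂(measT K) := by
  have hc := measurableSet_cone K
  have hi : Measurable ((cone K).indicator (1 : RS K → ENNReal)) := measurable_one.indicator hc
  have hinv := measurable_inv_RS K
  have hw : (Units.torsionOrder K : ENNReal) ≠ 0 := by
    exact_mod_cast (Units.torsionOrder_pos K).ne'
  have hw' : (Units.torsionOrder K : ENNReal) ≠ ⊤ := by simp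
  -- with `χ` the indicator of the cone, `w` times either side is the integral over `K_ℝ^×` of
  -- `w χ(t⁻¹) h(t)`: substitute `t ↦ t⁻¹`, or unfold over the cone
  rw [← ENNReal.mul_right_inj hw hw']
  have e1 := lintegral_unfold K (fun t => (cone K).indicator (1 : RS K → ENNReal) t⁻¹ * h t)
    ((hi.comp hinv).mul hh)
  have e2 : ∫⁻ t, (cone K).indicator (1 : RS K → ENNReal) t⁻¹ * h t ∂(measT K) =
      ∫⁻ t in cone K, h t⁻¹ ∂(measT K) := by
    rw [← lintegral_measT_inv, ← lintegral_indicator hc]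
    refine lintegral_congr fun t => ?_
    rw [inv_inv]
    by_cases ht : t ∈ cone K <;> simp [ht]
  rw [← e2, e1, ← lintegral_const_mul _ hh]
  refine setLIntegral_congr_fun hc fun t ht => ?_
  have hN : normR K t⁻¹ ≠ 0 := by
    rw [normR_inv]; exact inv_ne_zero (normR_pos_of_mem_cone K ht).ne'
  simp only [hu, ENNReal.tsum_mul_right, mul_inv, ← uE_inv]
  have e3 := (Equiv.inv (𝓞 K)ˣ).tsum_eq (fun u => (cone K).indicator (1 : RS K → ENNReal)
    (uE K u * t⁻¹))
  simp only [Equiv.inv_apply] at e3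
  rw [e3, tsum_indicator_cone K hN]

end Cone

/-! ### Convergence for σ > 1 -/

/-- The norm grows at most polynomially in the sup norm of `K_ℝ`. -/
lemma normR_le (x : RS K) : normR K x ≤ (1 + ‖x‖) ^ Module.finrank ℚ K := by
  have h1 : ∀ v, |x.1 v| ≤ 1 + ‖x‖ := fun v => by
    have := (norm_le_pi_norm x.1 v).trans (norm_fst_le x)
    rw [Real.norm_eq_abs] at this; linarith
  have h2 : ∀ v, ‖x.2 v‖ ≤ 1 + ‖x‖ := fun v => by
    have := (norm_le_pi_norm x.2 v).trans (norm_snd_le x)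
    linarith
  have hc : Module.finrank ℚ K = Fintype.card {v : InfinitePlace K // v.IsReal} +
      2 * Fintype.card {v : InfinitePlace K // v.IsComplex} := by
    rw [← InfinitePlace.card_add_two_mul_card_eq_rank]
  rw [hc, pow_add, pow_mul]
  unfold normR
  refine mul_le_mul ?_ ?_ (by positivity) (by positivity)
  · refine (Finset.prod_le_prod (fun v _ => abs_nonneg _) fun v _ => h1 v).trans ?_
    rw [Finset.prod_const, Finset.card_univ]
  · refine (Finset.prod_le_prod (fun v _ => by positivity) fun v _ =>
      pow_le_pow_left₀ (norm_nonneg _) (h2 v) 2).trans ?_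
    rw [Finset.prod_const, Finset.card_univ]

/-- Absolute convergence of the integral defining `Γ_K(σ)`. -/
lemma lintegral_gamma_lt_top {σ : ℝ} (hσ : 1 < σ) :
    ∫⁻ t, ENNReal.ofReal (fR K t) * ENNReal.ofReal (normR K t ^ σ) ∂(measT K) < ⊤ := by
  set n := Module.finrank ℚ K
  set r : ℝ := Module.finrank ℝ (RS K) + 1
  obtain ⟨C, hC⟩ := fR_decay K (LinearMap.id : RS K →ₗ[ℝ] RS K) Function.injective_id
    (r + n * (σ - 1))
  have hint : Integrable (fun x : RS K => C * (1 + ‖x‖) ^ (-r)) (measR K) :=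
    (integrable_one_add_norm (lt_add_one _)).const_mul C
  rw [lintegral_measT]
  refine lt_of_le_of_lt (lintegral_mono fun x => ?_) hint.lintegral_lt_top
  rw [← ENNReal.ofReal_mul (fR_pos K x).le, ← ENNReal.ofReal_mul
    (one_div_nonneg.2 (normR_nonneg K x))]
  refine ENNReal.ofReal_le_ofReal ?_
  have hN := normR_nonneg K x
  have hb : (0 : ℝ) < 1 + ‖x‖ := by positivity
  have h1 : 1 / normR K x * normR K x ^ σ ≤ (1 + ‖x‖) ^ (n * (σ - 1)) := by
    rcases hN.eq_or_lt with h0 | h0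
    · rw [← h0]; simp; positivity
    · rw [one_div, ← Real.rpow_neg_one, ← Real.rpow_add h0, Real.rpow_mul hb.le,
        Real.rpow_natCast, neg_add_eq_sub]
      exact Real.rpow_le_rpow hN (normR_le K x) (by linarith)
  calc 1 / normR K x * (fR K x * normR K x ^ σ) = fR K x * (1 / normR K x * normR K x ^ σ) := by
        ring
    _ ≤ (C * (1 + ‖x‖) ^ (-(r + n * (σ - 1)))) * (1 + ‖x‖) ^ (n * (σ - 1)) :=
        mul_le_mul (hC x) h1 (by positivity) ((fR_pos K x).le.trans (hC x))
    _ = C * (1 + ‖x‖) ^ (-r) := by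
        rw [mul_assoc, ← Real.rpow_add hb]; congr 2; ring

/-- The Dedekind zeta series converges for `σ > 1`. -/
lemma tsum_ideal_lt_top {σ : ℝ} (hσ : 1 < σ) :
    ∑' I : {I : Ideal (𝓞 K) // I ≠ 0}, ENNReal.ofReal ((Ideal.absNorm I.1 : ℝ) ^ (-σ)) < ⊤ := by
  classical
  have hbig : (fun n : ℕ => ∑ k ∈ Finset.Icc 1 n,
      ‖((Nat.card {I : Ideal (𝓞 K) // Ideal.absNorm I = k} : ℕ) : ℂ)‖) =O[Filter.atTop]
      fun n : ℕ => (n : ℝ) ^ (1 : ℝ) := by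
    -- the number of ideals of norm at most `n` grows linearly
    have h := (Ideal.tendsto_norm_le_div_atTop₀ K).comp tendsto_natCast_atTop_atTop
    obtain ⟨L, h⟩ : ∃ L : ℝ, Filter.Tendsto ((fun s : ℝ =>
        (Nat.card {I : (Ideal (𝓞 K))⁰ // (Ideal.absNorm (I : Ideal (𝓞 K)) : ℝ) ≤ s} : ℝ) / s) ∘
        (Nat.cast : ℕ → ℝ)) Filter.atTop (nhds L) := ⟨_, h⟩
    have h2 : Filter.Tendsto (fun n : ℕ => (∑ k ∈ Finset.Icc 1 n,
        ‖((Nat.card {I : Ideal (𝓞 K) // Ideal.absNorm I = k} : ℕ) : ℂ)‖) / (n : ℝ) ^ (1 : ℝ))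
        Filter.atTop (nhds L) := by
      refine h.congr fun n => ?_
      simp only [Function.comp_apply, Nat.cast_le, Real.rpow_one, Complex.norm_natCast,
        ← Nat.cast_sum]
      congr
      rw [← add_left_inj 1, ← Ideal.card_norm_le_eq_card_norm_le_add_one,
        show Finset.Icc 1 n = Finset.Ioc 0 n from Finset.Icc_succ_left_eq_Ioc _ _,
        show 1 = Nat.card {I : Ideal (𝓞 K) // Ideal.absNorm I = 0} by
          simp [Ideal.absNorm_eq_zero_iff],
        Finset.sum_Ioc_add_eq_sum_Icc (n.zero_le),
        ← Finset.card_preimage_eq_sum_card_image_eq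
          (fun k _ => Ideal.finite_setOfPred_absNorm_eq k)]
      simp [Set.coe_eq_subtype]
    refine Asymptotics.isBigO_of_div_tendsto_nhds ?_ _ h2
    filter_upwards [Filter.eventually_gt_atTop 0] with n hn h0
    simp only [Real.rpow_one, Nat.cast_eq_zero] at h0
    omega
  have hs := LSeriesSummable_of_sum_norm_bigO (s := (σ : ℂ)) hbig zero_le_one
    (by simpa using hσ)
  have hs' : ∑' n : ℕ, ‖LSeries.term (fun k => ((Nat.card
      {I : Ideal (𝓞 K) // Ideal.absNorm I = k} : ℕ) : ℂ)) σ n‖ₑ < ⊤ := by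
    have := hs.norm
    simp_rw [← ofReal_norm]
    rw [← ENNReal.ofReal_tsum_of_nonneg (fun _ => norm_nonneg _) this]
    exact ENNReal.ofReal_lt_top
  -- group the ideals by norm
  refine lt_of_le_of_lt ?_ hs'
  rw [← ENNReal.tsum_fiberwise _ (fun I : {I : Ideal (𝓞 K) // I ≠ 0} => Ideal.absNorm I.1)]
  refine ENNReal.tsum_le_tsum fun n => ?_
  have hval : ∀ b : ((fun I : {I : Ideal (𝓞 K) // I ≠ 0} => Ideal.absNorm I.1) ⁻¹' {n}),
      ENNReal.ofReal ((Ideal.absNorm b.1.1 : ℝ) ^ (-σ)) = ENNReal.ofReal ((n : ℝ) ^ (-σ)) := by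
    intro b
    have : Ideal.absNorm b.1.1 = n := b.2
    rw [this]
  simp_rw [hval]
  rw [ENNReal.tsum_const]
  rcases Nat.eq_zero_or_pos n with rfl | hn
  · have : IsEmpty ((fun I : {I : Ideal (𝓞 K) // I ≠ 0} => Ideal.absNorm I.1) ⁻¹' {0}) :=
      ⟨fun b => b.1.2 (Ideal.absNorm_eq_zero_iff.1 b.2)⟩
    rw [(ENat.card_eq_zero_iff_empty _).2 this]
    simp
  · rw [LSeries.term_of_ne_zero hn.ne', ← ofReal_norm, norm_div,
      Complex.norm_natCast_cpow_of_pos hn, Complex.ofReal_re, div_eq_mul_inv,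
      ← Real.rpow_neg (by positivity), ENNReal.ofReal_mul (norm_nonneg _)]
    gcongr
    have hfin : Finite {I : Ideal (𝓞 K) // Ideal.absNorm I = n} :=
      (Ideal.finite_setOfPred_absNorm_eq (S := 𝓞 K) n)
    let j : ((fun I : {I : Ideal (𝓞 K) // I ≠ 0} => Ideal.absNorm I.1) ⁻¹' {n}) →
      {I : Ideal (𝓞 K) // Ideal.absNorm I = n} := fun b => ⟨b.1.1, b.2⟩
    have hj : Function.Injective j := fun a b hab => by
      have : (j a).1 = (j b).1 := congrArg Subtype.val hab
      exact Subtype.ext (Subtype.ext this)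
    have := ENat.card_le_card_of_injective hj
    rw [ENat.card_eq_coe_natCard {I : Ideal (𝓞 K) // Ideal.absNorm I = n}] at this
    rw [Complex.norm_natCast, ENNReal.ofReal_natCast]
    exact_mod_cast this

/-- The partial zeta series converges for `σ > 1`. -/
lemma tsum_repr_lt_top {A : FractionalIdeal (𝓞 K)⁰ K} (hA : A ≠ 0) {R : Set K}
    (hR : IsIdealRepr K A R) {σ : ℝ} (hσ : 1 < σ) :
    ∑' r : R, ENNReal.ofReal ((normR K (mixedEmbedding K r)) ^ (-σ)) < ⊤ := by
  have hr0 : ∀ r : R, (r : K) ≠ 0 := fun r h => hR.2.1 (h ▸ r.2)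
  -- `r ↦ r A⁻¹` is an injection from the representatives into the nonzero integral ideals
  have h1 : ∀ r : R, ∃ I : Ideal (𝓞 K), (I : FractionalIdeal (𝓞 K)⁰ K) =
      FractionalIdeal.spanSingleton (𝓞 K)⁰ (r : K) * A⁻¹ := fun r => by
    refine FractionalIdeal.le_one_iff_exists_coeIdeal.1 ?_
    rw [← mul_inv_cancel₀ hA]
    exact mul_le_mul_left (FractionalIdeal.spanSingleton_le_iff_mem.2 (hR.1 r r.2)) _
  choose φ hφ using h1
  have hφ0 : ∀ r, φ r ≠ 0 := fun r h => by
    have := hφ r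
    rw [h] at this
    have h2 : FractionalIdeal.spanSingleton (𝓞 K)⁰ (r : K) * A⁻¹ = 0 := by
      rw [← this]; exact FractionalIdeal.coeIdeal_bot
    rcases mul_eq_zero.1 h2 with h3 | h3
    · exact hr0 r (FractionalIdeal.spanSingleton_eq_zero_iff.1 h3)
    · exact hA (inv_eq_zero.1 h3)
  let ψ : R → {I : Ideal (𝓞 K) // I ≠ 0} := fun r => ⟨φ r, hφ0 r⟩
  have hψ : Function.Injective ψ := fun r r' h => by
    have h2 : φ r = φ r' := congrArg Subtype.val h
    have h3 : FractionalIdeal.spanSingleton (𝓞 K)⁰ (r : K) =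
        FractionalIdeal.spanSingleton (𝓞 K)⁰ (r' : K) := by
      apply mul_right_cancel₀ (inv_ne_zero hA)
      rw [← hφ, ← hφ, h2]
    obtain ⟨z, hz⟩ := FractionalIdeal.spanSingleton_eq_spanSingleton.1 h3
    have h4 := (hR.2.2 r' (hR.1 r' r'.2) (hr0 r')).unique
      (y₁ := r) (y₂ := r') ⟨r.2, z, by
        rw [← hz, Units.smul_def, Algebra.smul_def]⟩ ⟨r'.2, 1, by simp⟩
    exact Subtype.ext h4
  set c : ℝ := ((FractionalIdeal.absNorm A : ℚ) : ℝ)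
  have hc : 0 < c := by
    have : 0 < FractionalIdeal.absNorm A := lt_of_le_of_ne (FractionalIdeal.absNorm_nonneg A)
      (fun h => hA (FractionalIdeal.absNorm_eq_zero_iff.1 h.symm))
    exact Rat.cast_pos.2 this
  have hnorm : ∀ r : R, normR K (mixedEmbedding K (r : K)) = c * Ideal.absNorm (φ r) := by
    intro r
    rw [normR_eq, mixedEmbedding.norm_eq_norm, ← FractionalIdeal.absNorm_span_singleton (𝓞 K)]
    have : FractionalIdeal.spanSingleton (𝓞 K)⁰ (r : K) = A * (φ r : FractionalIdeal (𝓞 K)⁰ K) := by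
      rw [hφ, mul_comm, inv_mul_cancel_right₀ hA]
    rw [this, map_mul, FractionalIdeal.coeIdeal_absNorm]
    push_cast
    rfl
  simp_rw [hnorm, Real.mul_rpow hc.le (Nat.cast_nonneg _),
    ENNReal.ofReal_mul (Real.rpow_nonneg hc.le _)]
  rw [ENNReal.tsum_mul_left]
  refine ENNReal.mul_lt_top ENNReal.ofReal_lt_top ?_
  exact lt_of_le_of_lt (ENNReal.tsum_comp_le_tsum_of_injective hψ
    (fun I => ENNReal.ofReal ((Ideal.absNorm I.1 : ℝ) ^ (-σ)))) (tsum_ideal_lt_top K hσ)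

/-! ### The measure whose Mellin transform is ξ_K -/

lemma countable_units : Countable (𝓞 K)ˣ := by
  have : Countable K := (Module.finBasis ℚ K).equivFun.injective.countable
  have h1 : Function.Injective (fun u : (𝓞 K)ˣ => ((u : 𝓞 K) : K)) := fun u v huv => by
    apply Units.ext
    exact RingOfIntegers.coe_injective huv
  exact h1.countable

/-- The measure `γ` on `(0, ∞)` whose Mellin transform is `Γ_K`. -/
def gam : Measure ℝ :=
  ((measT K).withDensity fun t => ENNReal.ofReal (fR K t)).map (normR K)

/-- The measure `ν_A` on `(0, ∞)` whose Mellin transform is `ξ_K(s, A)`. -/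
def nu (A : FractionalIdeal (𝓞 K)⁰ K) (R : Set K) : Measure ℝ :=
  Measure.sum fun r : R =>
    (gam K).map fun y => covol K A * (normR K (mixedEmbedding K (r : K)))⁻¹ * y

lemma measurable_ofReal_fR : Measurable fun t => ENNReal.ofReal (fR K t) :=
  (continuous_fR K).measurable.ennreal_ofReal

lemma lintegral_gam (k : ℝ → ENNReal) (hk : Measurable k) :
    ∫⁻ y, k y ∂(gam K) = ∫⁻ t, ENNReal.ofReal (fR K t) * k (normR K t) ∂(measT K) := by
  have hm : Measurable (normR K) := (continuous_normR K).measurable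
  unfold gam
  rw [lintegral_map hk hm]
  exact lintegral_withDensity_eq_lintegral_mul _ (measurable_ofReal_fR K) (hk.comp hm)

lemma lintegral_nu (A : FractionalIdeal (𝓞 K)⁰ K) (R : Set K) (k : ℝ → ENNReal)
    (hk : Measurable k) : ∫⁻ y, k y ∂(nu K A R) =
      ∑' r : R, ∫⁻ t, ENNReal.ofReal (fR K t) *
        k (covol K A * (normR K (mixedEmbedding K (r : K)))⁻¹ * normR K t) ∂(measT K) := by
  unfold nu
  rw [lintegral_sum_measure]
  refine tsum_congr fun r => ?_
  rw [lintegral_map hk (by fun_prop), lintegral_gam K _ (by fun_prop)]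

lemma normR_embed_ne_zero {x : K} (hx : x ≠ 0) : normR K (mixedEmbedding K x) ≠ 0 := by
  rw [normR_eq, mixedEmbedding.norm_eq_norm]
  simpa using hx

lemma measurable_thE (A : FractionalIdeal (𝓞 K)⁰ K) : Measurable (thE K A) := by
  have : Countable K := (Module.finBasis ℚ K).equivFun.injective.countable
  refine Measurable.tsum fun α => ?_
  exact ((continuous_fR K).comp (continuous_id.mul continuous_const)).measurable.ennreal_ofReal

/-- A set of representatives decomposes the nonzero elements of `A` into free unit orbits. -/
lemma thE_unfold {A : FractionalIdeal (𝓞 K)⁰ K} {R : Set K} (hR : IsIdealRepr K A R) (t : RS K) :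
    thE K A t = ∑' (u : (𝓞 K)ˣ) (r : R),
      ENNReal.ofReal (fR K (t * (uE K u * mixedEmbedding K (r : K)))) := by
  have hr0 : ∀ r : R, (r : K) ≠ 0 := fun r h => hR.2.1 (h ▸ r.2)
  have hu0 : ∀ u : (𝓞 K)ˣ, ((u : 𝓞 K) : K) ≠ 0 := fun u => by simp
  let e : (𝓞 K)ˣ × R → {α : K // α ∈ A ∧ α ≠ 0} := fun p =>
    ⟨((p.1 : 𝓞 K) : K) * (p.2 : K), by
      have := Submodule.smul_mem (A : Submodule (𝓞 K) K) (p.1 : 𝓞 K) (hR.1 p.2 p.2.2)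
      rwa [Algebra.smul_def] at this, mul_ne_zero (hu0 _) (hr0 _)⟩
  have he : Function.Bijective e := by
    constructor
    · rintro ⟨u, r⟩ ⟨u', r'⟩ h
      have h1 : ((u : 𝓞 K) : K) * (r : K) = ((u' : 𝓞 K) : K) * (r' : K) := congrArg Subtype.val h
      have h2 : (r : K) = r' := (hR.2.2 _ (e ⟨u, r⟩).2.1 (e ⟨u, r⟩).2.2).unique
        ⟨r.2, u, rfl⟩ ⟨r'.2, u', h1.symm⟩
      have h3 : r = r' := Subtype.ext h2
      subst h3
      have h4 := mul_right_cancel₀ (hr0 r) h1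
      have h5 : u = u' := Units.ext (RingOfIntegers.coe_injective h4)
      rw [h5]
    · rintro ⟨α, hα, hα0⟩
      obtain ⟨r, ⟨hr, u, hu⟩, -⟩ := hR.2.2 α hα hα0
      exact ⟨⟨u, ⟨r, hr⟩⟩, Subtype.ext hu⟩
  unfold thE
  rw [← (Equiv.ofBijective e he).tsum_eq, ENNReal.tsum_prod']
  refine tsum_congr fun u => tsum_congr fun r => ?_
  simp [e, uE]

/-- The theta series of `A` is invariant under multiplication by units. -/
lemma thE_unit {A : FractionalIdeal (𝓞 K)⁰ K} {R : Set K} (hR : IsIdealRepr K A R)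
    (v : (𝓞 K)ˣ) (t : RS K) : thE K A (uE K v * t) = thE K A t := by
  rw [thE_unfold K hR, thE_unfold K hR, ← (Equiv.mulLeft v).tsum_eq (fun u => ∑' r : R,
    ENNReal.ofReal (fR K (t * (uE K u * mixedEmbedding K (r : K)))))]
  refine tsum_congr fun u => tsum_congr fun r => ?_
  rw [Equiv.coe_mulLeft, uE_mul]
  congr 2
  ring

/-- `w ν_A` is the image of `thE A · d^×t` on the cone under `t ↦ V(A) N(t)`: unfold the integrals
defining `ν_A` over the cone and collect the unit orbits of `A`. -/
lemma lintegral_nu_cone {A : FractionalIdeal (𝓞 K)⁰ K} {R : Set K} (hR : IsIdealRepr K A R)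
    (k : ℝ → ENNReal) (hk : Measurable k) :
    (Units.torsionOrder K : ENNReal) * ∫⁻ y, k y ∂(nu K A R) =
      ∫⁻ t in cone K, k (covol K A * normR K t) * thE K A t ∂(measT K) := by
  have hcount := countable_units K
  have : Countable K := (Module.finBasis ℚ K).equivFun.injective.countable
  have hm : Measurable (normR K) := (continuous_normR K).measurable
  have hr0 : ∀ r : R, normR K (mixedEmbedding K (r : K)) ≠ 0 := fun r =>
    normR_embed_ne_zero K fun h => hR.2.1 (h ▸ r.2)
  have hf := measurable_ofReal_fR K
  have hmeas : ∀ a : RS K, Measurable fun t =>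
      ENNReal.ofReal (fR K (a * t)) * k (covol K A * normR K t) := fun a =>
    (hf.comp (measurable_mul_left_RS K a)).mul (hk.comp (hm.const_mul _))
  rw [lintegral_nu K A R k hk, ← ENNReal.tsum_mul_left]
  calc ∑' r : R, (Units.torsionOrder K : ENNReal) * ∫⁻ t, ENNReal.ofReal (fR K t) *
        k (covol K A * (normR K (mixedEmbedding K (r : K)))⁻¹ * normR K t) ∂(measT K)
      = ∑' r : R, ∫⁻ t in cone K, ∑' u : (𝓞 K)ˣ,
          ENNReal.ofReal (fR K (mixedEmbedding K (r : K) * (uE K u * t))) *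
            k (covol K A * normR K (uE K u * t)) ∂(measT K) := by
        refine tsum_congr fun r => ?_
        rw [← lintegral_unfold K (fun t => ENNReal.ofReal (fR K (mixedEmbedding K (r : K) * t)) *
            k (covol K A * normR K t)) (hmeas _),
          ← lintegral_measT_mul K (hr0 r) (fun t => ENNReal.ofReal (fR K t) *
            k (covol K A * (normR K (mixedEmbedding K (r : K)))⁻¹ * normR K t)) ((hf.mul (hk.comp (hm.const_mul _))))]
        congr 1
        refine lintegral_congr fun t => ?_
        rw [normR_mul]
        congr 2
        field_simp [hr0 r]
    _ = ∫⁻ t in cone K, ∑' r : R, ∑' u : (𝓞 K)ˣ,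
          ENNReal.ofReal (fR K (mixedEmbedding K (r : K) * (uE K u * t))) *
            k (covol K A * normR K (uE K u * t)) ∂(measT K) := by
        refine (lintegral_tsum fun r => ?_).symm
        exact (Measurable.tsum fun u =>
          (hmeas _).comp (measurable_mul_left_RS K _)).aemeasurable
    _ = _ := by
        refine lintegral_congr fun t => ?_
        rw [ENNReal.tsum_comm, thE_unfold K hR, ← ENNReal.tsum_mul_left]
        refine tsum_congr fun u => ?_
        rw [← ENNReal.tsum_mul_left]
        refine tsum_congr fun r => ?_
        rw [normR_mul, normR_uE, one_mul, mul_comm]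
        congr 3
        ring

/-- `V(A) V(A*) = 1`: apply the theta formula at `t = 1` to `A`, then to `A*`, using `A** = A`. -/
lemma covol_mul_covol_dual (I : (FractionalIdeal (𝓞 K)⁰ K)ˣ) :
    covol K I * covol K (dualUnit K I) = 1 := by
  have h1 : normR K (1 : RS K) ≠ 0 := by rw [normR_one]; exact one_ne_zero
  have hd : dualUnit K (dualUnit K I) = I := Units.ext (FractionalIdeal.dual_dual ℤ ℚ _)
  have a1 := theta K I h1
  have a2 := theta K (dualUnit K I) h1
  have hinv : (1 : RS K)⁻¹ = 1 := by
    have := mul_inv_RS K h1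
    rwa [one_mul] at this
  rw [hinv, normR_one, mul_one] at a1 a2
  rw [hd, ← a1, ← mul_assoc, ← ENNReal.ofReal_mul (covol_pos K (dualUnit K I).ne_zero).le] at a2
  have hfin : 1 + thE K I 1 ≠ ⊤ := by simpa using (thE_lt_top K I h1).ne
  have h3 : ENNReal.ofReal (covol K (dualUnit K I) * covol K I) = 1 := by
    have : ENNReal.ofReal (covol K (dualUnit K I) * covol K I) * (1 + thE K I 1) =
      1 * (1 + thE K I 1) := by rw [a2, one_mul]
    exact (ENNReal.mul_left_inj (by simp) hfin).1 this
  rw [ENNReal.ofReal_eq_one] at h3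
  rw [mul_comm, h3]

/-- Scaling invariance of `dy/y`. -/
lemma lintegral_Ioi_mul {V : ℝ} (hV : 0 < V) (k : ℝ → ENNReal) :
    ∫⁻ y in Set.Ioi 0, ENNReal.ofReal (1 / y) * k (V * y) =
      ∫⁻ y in Set.Ioi 0, ENNReal.ofReal (1 / y) * k y := by
  have himg : (fun y : ℝ => V * y) '' Set.Ioi 0 = Set.Ioi 0 := by
    rw [Set.image_mul_left_Ioi hV, mul_zero]
  have h := lintegral_image_eq_lintegral_abs_deriv_mul (measurableSet_Ioi (a := (0 : ℝ)))
    (f := fun y => V * y) (f' := fun _ => V)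
    (fun x _ => by simpa using ((hasDerivAt_id x).const_mul V).hasDerivWithinAt)
    (mul_right_injective₀ hV.ne').injOn (fun y => ENNReal.ofReal (1 / y) * k y)
  rw [himg] at h
  rw [h]
  refine setLIntegral_congr_fun measurableSet_Ioi fun y hy => ?_
  rw [← mul_assoc, ← ENNReal.ofReal_mul (abs_nonneg _), abs_of_pos hV]
  congr 2
  have : y ≠ 0 := (Set.mem_Ioi.1 hy).ne'
  field_simp

/-- The theta inversion formula, pushed forward to `(0, ∞)`. -/
lemma nu_inversion (I : (FractionalIdeal (𝓞 K)⁰ K)ˣ) {R R' : Set K}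
    (hR : IsIdealRepr K (I : FractionalIdeal (𝓞 K)⁰ K) R)
    (hR' : IsIdealRepr K (dualUnit K I : FractionalIdeal (𝓞 K)⁰ K) R')
    (k : ℝ → ENNReal) (hk : Measurable k) :
    (Units.torsionOrder K : ENNReal) * ∫⁻ y, k y ∂(nu K I R) +
      coneConst K * ∫⁻ y in Set.Ioi 0, ENNReal.ofReal (1 / y) * k y =
    (Units.torsionOrder K : ENNReal) * ∫⁻ y, ENNReal.ofReal y * k y⁻¹ ∂(nu K (dualUnit K I) R') +
      coneConst K * ∫⁻ y in Set.Ioi 0, k y⁻¹ := by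
  have hm : Measurable (normR K) := (continuous_normR K).measurable
  set V := covol K (I : FractionalIdeal (𝓞 K)⁰ K)
  set V' := covol K (dualUnit K I : FractionalIdeal (𝓞 K)⁰ K) with hV'd
  have hV : 0 < V := covol_pos K I.ne_zero
  have hV' : 0 < V' := covol_pos K (dualUnit K I).ne_zero
  have hVV : V * V' = 1 := covol_mul_covol_dual K I
  have hk' : Measurable fun y : ℝ => ENNReal.ofReal y * k y⁻¹ := by fun_prop
  have hth := measurable_thE K (I : FractionalIdeal (𝓞 K)⁰ K)
  have hth' := measurable_thE K (dualUnit K I : FractionalIdeal (𝓞 K)⁰ K)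
  -- the inhomogeneous term on each side is the contribution of `α = 0` to the theta series
  have L : (Units.torsionOrder K : ENNReal) * ∫⁻ y, k y ∂(nu K I R) +
      coneConst K * ∫⁻ y in Set.Ioi 0, ENNReal.ofReal (1 / y) * k y =
      ∫⁻ t in cone K, k (V * normR K t) * (1 + thE K I t) ∂(measT K) := by
    rw [lintegral_nu_cone K hR k hk, ← lintegral_Ioi_mul hV k,
      ← lintegral_cone K (fun y => k (V * y)) (by fun_prop), ← lintegral_add_right]
    · refine lintegral_congr fun t => ?_
      ring
    · exact hk.comp (hm.const_mul _)
  have Rt : (Units.torsionOrder K : ENNReal) *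
      ∫⁻ y, ENNReal.ofReal y * k y⁻¹ ∂(nu K (dualUnit K I) R') +
      coneConst K * ∫⁻ y in Set.Ioi 0, k y⁻¹ =
      ∫⁻ t in cone K, ENNReal.ofReal (V' * normR K t) * k (V' * normR K t)⁻¹ *
        (1 + thE K (dualUnit K I) t) ∂(measT K) := by
    have h1 : ∫⁻ y in Set.Ioi (0 : ℝ), k y⁻¹ =
        ∫⁻ y in Set.Ioi 0, ENNReal.ofReal (1 / y) * (ENNReal.ofReal y * k y⁻¹) := by
      refine setLIntegral_congr_fun measurableSet_Ioi fun y hy => ?_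
      have hy0 : (0 : ℝ) < y := hy
      rw [← mul_assoc, ← ENNReal.ofReal_mul (by positivity), one_div, inv_mul_cancel₀ hy0.ne',
        ENNReal.ofReal_one, one_mul]
    rw [h1, lintegral_nu_cone K hR' _ hk', ← lintegral_Ioi_mul hV' (fun y => _ * k y⁻¹),
      ← lintegral_cone K (fun y => ENNReal.ofReal (V' * y) * k (V' * y)⁻¹)
        (by fun_prop), ← lintegral_add_right]
    · refine lintegral_congr fun t => ?_
      ring
    · exact hk'.comp (hm.const_mul _)
  have hinv := measurable_inv_RS K
  rw [L, Rt, ← lintegral_cone_inv]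
  · refine setLIntegral_congr_fun (measurableSet_cone K) fun t ht => ?_
    have hN := normR_pos_of_mem_cone K ht
    have hN' : normR K t⁻¹ ≠ 0 := by rw [normR_inv]; exact (inv_pos.2 hN).ne'
    have hinvinv : (t⁻¹)⁻¹ = t := inv_inv t
    have h2 := theta K I hN'
    rw [hinvinv] at h2
    have e1 : (V' * normR K t)⁻¹ = V * normR K t⁻¹ := by
      rw [normR_inv, mul_inv, eq_inv_of_mul_eq_one_left hVV]
    rw [← h2, e1, normR_inv]
    have e2 : ENNReal.ofReal (V' * normR K t) * ENNReal.ofReal (V * (normR K t)⁻¹) = 1 := by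
      rw [← ENNReal.ofReal_mul (by positivity), ENNReal.ofReal_eq_one]
      field_simp
      rw [mul_comm, hVV]
    calc k (V * (normR K t)⁻¹) * (1 + thE K I t⁻¹) =
        (ENNReal.ofReal (V' * normR K t) * ENNReal.ofReal (V * (normR K t)⁻¹)) *
          (k (V * (normR K t)⁻¹) * (1 + thE K I t⁻¹)) := by rw [e2, one_mul]
      _ = _ := by ring
  · exact (hk.comp (hm.const_mul _)).mul (hth.const_add _)
  · intro u t
    rw [normR_mul, normR_uE, one_mul, thE_unit K hR]

/-! ### ξ_K as a Mellin transform -/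

lemma torsionOrder_ne_zero_ennreal : (Units.torsionOrder K : ENNReal) ≠ 0 := by
  exact_mod_cast NumberField.Units.torsionOrder_ne_zero K

/-- A Borel set `E` is `ν_A`-null as soon as `V · |N|` avoids it almost everywhere on the cone. -/
lemma nu_null {A : FractionalIdeal (𝓞 K)⁰ K} {R : Set K} (hR : IsIdealRepr K A R) {E : Set ℝ}
    (hE : MeasurableSet E)
    (h : ∫⁻ t in cone K, E.indicator 1 (covol K A * normR K t) ∂(measT K) = 0) :
    nu K A R E = 0 := by
  have hm : Measurable (normR K) := (continuous_normR K).measurable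
  have hk : Measurable (E.indicator (1 : ℝ → ENNReal)) := measurable_one.indicator hE
  have key := lintegral_nu_cone K hR _ hk
  have hz : ∫⁻ t in cone K, E.indicator 1 (covol K A * normR K t) * thE K A t ∂(measT K) = 0 := by
    have hmm : Measurable fun t => E.indicator (1 : ℝ → ENNReal) (covol K A * normR K t) :=
      hk.comp (hm.const_mul _)
    rw [lintegral_eq_zero_iff hmm] at h
    refine (lintegral_congr_ae ?_).trans lintegral_zero
    filter_upwards [h] with t ht
    simp only [Pi.zero_apply] at ht
    rw [ht, zero_mul]
  rw [hz, lintegral_indicator_one hE] at key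
  exact (mul_eq_zero.1 key).resolve_left (torsionOrder_ne_zero_ennreal K)

lemma nu_Iic {A : FractionalIdeal (𝓞 K)⁰ K} (hA : A ≠ 0) {R : Set K} (hR : IsIdealRepr K A R) :
    nu K A R (Set.Iic 0) = 0 := by
  refine nu_null K hR measurableSet_Iic ?_
  rw [← lintegral_zero (μ := (measT K).restrict (cone K))]
  refine setLIntegral_congr_fun (measurableSet_cone K) fun t ht => ?_
  refine Set.indicator_of_notMem ?_ _
  exact not_le.2 (mul_pos (covol_pos K hA) (normR_pos_of_mem_cone K ht))

/-- `ν_A` has no atoms, so it does not matter to which half the point `y = 1` is assigned. -/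
lemma nu_singleton {A : FractionalIdeal (𝓞 K)⁰ K} (hA : A ≠ 0) {R : Set K}
    (hR : IsIdealRepr K A R) (x : ℝ) : nu K A R {x} = 0 := by
  refine nu_null K hR (measurableSet_singleton x) ?_
  have hk : Measurable fun y : ℝ => ({x} : Set ℝ).indicator (1 : ℝ → ENNReal) (covol K A * y) :=
    (measurable_one.indicator (measurableSet_singleton x)).comp (measurable_id.const_mul _)
  rw [lintegral_cone K _ hk, mul_eq_zero]
  right
  have hae : ∀ᵐ y : ℝ ∂(volume.restrict (Set.Ioi 0)), y ∉ ({x / covol K A} : Set ℝ) :=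
    measure_eq_zero_iff_ae_notMem.1 (measure_singleton _)
  rw [← lintegral_zero (μ := volume.restrict (Set.Ioi (0 : ℝ)))]
  refine lintegral_congr_ae ?_
  filter_upwards [hae] with y hy
  rw [Set.indicator_of_notMem, mul_zero]
  intro h
  exact hy (Set.mem_singleton_iff.2
    (by rw [eq_div_iff (covol_pos K hA).ne', mul_comm]; exact Set.mem_singleton_iff.1 h))

/-- The real moments of `ν_A` factor as `V^σ · Γ_K(σ)` times a partial zeta series. -/
lemma nu_moment {A : FractionalIdeal (𝓞 K)⁰ K} (hA : A ≠ 0) {R : Set K} (hR : IsIdealRepr K A R)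
    (σ : ℝ) (hσ : 1 < σ) : ∫⁻ y, ENNReal.ofReal (y ^ σ) ∂(nu K A R) < ⊤ := by
  have hm : Measurable (normR K) := (continuous_normR K).measurable
  have hV := (covol_pos K hA).le
  rw [lintegral_nu K A R _ (by fun_prop)]
  have hterm : ∀ r : R, ∫⁻ t, ENNReal.ofReal (fR K t) * ENNReal.ofReal
      ((covol K A * (normR K (mixedEmbedding K (r : K)))⁻¹ * normR K t) ^ σ) ∂(measT K) =
      ENNReal.ofReal ((normR K (mixedEmbedding K (r : K))) ^ (-σ)) *
        (ENNReal.ofReal (covol K A ^ σ) *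
          ∫⁻ t, ENNReal.ofReal (fR K t) * ENNReal.ofReal (normR K t ^ σ) ∂(measT K)) := by
    intro r
    have hn := normR_nonneg K (mixedEmbedding K (r : K))
    rw [← mul_assoc, ← lintegral_const_mul _ (by
      exact (measurable_ofReal_fR K).mul (hm.pow_const σ).ennreal_ofReal)]
    refine lintegral_congr fun t => ?_
    have hN := normR_nonneg K t
    rw [Real.mul_rpow (by positivity) hN, Real.mul_rpow hV (by positivity),
      Real.inv_rpow hn, ← Real.rpow_neg hn, ENNReal.ofReal_mul (by positivity),
      ENNReal.ofReal_mul (by positivity)]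
    ring
  simp_rw [hterm]
  rw [ENNReal.tsum_mul_right]
  exact ENNReal.mul_lt_top (tsum_repr_lt_top K hA hR hσ)
    (ENNReal.mul_lt_top ENNReal.ofReal_lt_top (lintegral_gamma_lt_top K hσ))

/-- `Γ_K` is the Mellin transform of `γ`. -/
lemma integral_gam (s : ℂ) : ∫ y, (y : ℂ) ^ s ∂(gam K) = GammaF K s := by
  have hm : Measurable (normR K) := (continuous_normR K).measurable
  unfold gam GammaF
  rw [measT_restrict_TF, integral_map hm.aemeasurable
    (measurable_ofReal_cpow s).aestronglyMeasurable,
    integral_withDensity_eq_integral_toReal_smul (measurable_ofReal_fR K)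
      (Filter.Eventually.of_forall fun _ => ENNReal.ofReal_lt_top)]
  refine integral_congr_ae (Filter.Eventually.of_forall fun t => ?_)
  simp only
  rw [ENNReal.toReal_ofReal ((fR_pos K t).le), Complex.real_smul]

/-- In the half-plane of convergence `ξ_K(s, A)` is the Mellin transform of `ν_A`. -/
lemma xi_eq_integral {A : FractionalIdeal (𝓞 K)⁰ K} (hA : A ≠ 0) {R : Set K}
    (hR : IsIdealRepr K A R) {s : ℂ} (hs : 1 < s.re) :
    xiF K s A R = ∫ y, (y : ℂ) ^ s ∂(nu K A R) := by
  have hint := integrable_cpow_of_moment (nu_Iic K hA hR) (nu_moment K hA hR) hs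
  have hV := (covol_pos K hA).le
  have hterm : ∀ r : R, ∫ y, (y : ℂ) ^ s
      ∂((gam K).map fun y => covol K A * (normR K (mixedEmbedding K (r : K)))⁻¹ * y) =
      (covol K A : ℂ) ^ s * GammaF K s * ((|Algebra.norm ℚ (r : K)| : ℚ) : ℂ) ^ (-s) := by
    intro r
    have hn := normR_nonneg K (mixedEmbedding K (r : K))
    have hnorm : ((|Algebra.norm ℚ (r : K)| : ℚ) : ℂ) =
        ((normR K (mixedEmbedding K (r : K)) : ℝ) : ℂ) := by
      rw [normR_eq, mixedEmbedding.norm_eq_norm]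
      rw [← Complex.ofReal_ratCast, Rat.cast_abs]
    rw [integral_map (by fun_prop) (measurable_ofReal_cpow s).aestronglyMeasurable, hnorm,
      ← integral_gam, mul_right_comm, ← integral_const_mul]
    have hpos : ∀ᵐ y ∂(gam K), 0 ≤ y := by
      unfold gam
      rw [ae_map_iff (continuous_normR K).measurable.aemeasurable measurableSet_Ici]
      exact Filter.Eventually.of_forall fun t => normR_nonneg K t
    refine integral_congr_ae ?_
    filter_upwards [hpos] with y hy
    rw [Complex.ofReal_mul, Complex.mul_cpow_ofReal_nonneg (by positivity) hy,
      Complex.ofReal_mul, Complex.mul_cpow_ofReal_nonneg hV (by positivity),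
      Complex.ofReal_inv, Complex.inv_cpow _ _ (by
        rw [Complex.arg_ofReal_of_nonneg hn]; exact Real.pi_pos.ne), Complex.cpow_neg]
  have hcov : (covol K A : ℂ) ^ s =
      (dF K : ℂ) ^ (s / 2) * (FractionalIdeal.absNorm A : ℂ) ^ s := by
    have h1 : (0 : ℝ) ≤ (FractionalIdeal.absNorm A : ℚ) := by
      exact_mod_cast FractionalIdeal.absNorm_nonneg A
    have h2 : ((dF K : ℝ) : ℂ) = ((Real.sqrt (dF K) : ℝ) : ℂ) * ((Real.sqrt (dF K) : ℝ) : ℂ) := by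
      rw [← Complex.ofReal_mul, Real.mul_self_sqrt (Nat.cast_nonneg _)]
    have h3 : ((dF K : ℝ) : ℂ) ^ (s / 2) = ((Real.sqrt (dF K) : ℝ) : ℂ) ^ s := by
      have h0 : ((Real.sqrt (dF K) : ℝ) : ℂ) ≠ 0 := by
        have : (0 : ℝ) < dF K := by
          exact_mod_cast Int.natAbs_pos.2 (NumberField.discr_ne_zero K)
        exact_mod_cast (Real.sqrt_pos.2 this).ne'
      rw [h2, Complex.mul_cpow_ofReal_nonneg (Real.sqrt_nonneg _) (Real.sqrt_nonneg _),
        ← Complex.cpow_add _ _ h0, add_halves]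
    unfold covol
    rw [Complex.ofReal_mul, Complex.mul_cpow_ofReal_nonneg (Real.sqrt_nonneg _) h1, ← h3]
    push_cast
    rfl
  unfold nu at hint ⊢
  rw [← (hasSum_integral_measure hint).tsum_eq]
  simp_rw [hterm]
  rw [tsum_mul_left, hcov]
  unfold xiF
  ring

end Zeta

/-! ### Analytic continuation and functional equation -/

/-- The completed zeta function `ξ_K(s, 𝔄)` extends to a meromorphic
function on `ℂ` whose only poles are simple poles at `s = 0` and `s = 1` (written
`g s + a/s + b/(s-1)` with `g` entire, `a, b ≠ 0`), and satisfies the functional equation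
`ξ_K(s, 𝔄) = ξ_K(1-s, 𝔄*)` with `𝔄* = (𝔄 𝔡_K)⁻¹` the dual ideal. -/
theorem statement17 (K : Type) [Field K] [NumberField K]
    (A : FractionalIdeal (𝓞 K)⁰ K) (hA : A ≠ 0)
    (R R' : Set K) (hR : IsIdealRepr K A R)
    (hR' : IsIdealRepr K (FractionalIdeal.dual ℤ ℚ A) R') :
    ∃ (a b a' b' : ℂ) (g g' : ℂ → ℂ), Differentiable ℂ g ∧ Differentiable ℂ g' ∧
      a ≠ 0 ∧ b ≠ 0 ∧ a' ≠ 0 ∧ b' ≠ 0 ∧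
      (∀ s : ℂ, 1 < s.re → xiF K s A R = g s + a / s + b / (s - 1)) ∧
      (∀ s : ℂ, 1 < s.re →
        xiF K s (FractionalIdeal.dual ℤ ℚ A) R' = g' s + a' / s + b' / (s - 1)) ∧
      (∀ s : ℂ, s ≠ 0 → s ≠ 1 →
        g s + a / s + b / (s - 1) = g' (1 - s) + a' / (1 - s) + b' / (1 - s - 1)) := by
  let I : (FractionalIdeal (𝓞 K)⁰ K)ˣ := Units.mk0 A hA
  have hd : dualUnit K (dualUnit K I) = I := Units.ext (FractionalIdeal.dual_dual ℤ ℚ _)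
  have hI' : ((dualUnit K I : (FractionalIdeal (𝓞 K)⁰ K)ˣ) : FractionalIdeal (𝓞 K)⁰ K) =
    FractionalIdeal.dual ℤ ℚ A := rfl
  have hB : FractionalIdeal.dual ℤ ℚ A ≠ 0 := hI' ▸ (dualUnit K I).ne_zero
  have hinv := nu_inversion K I (R := R) (R' := R') hR hR'
  have hinv' := nu_inversion K (dualUnit K I) (R := R') (R' := R) hR' (by rw [hd]; exact hR)
  rw [hd] at hinv'
  set w : ENNReal := (Units.torsionOrder K : ENNReal) with hw
  have hw0 : w ≠ 0 := torsionOrder_ne_zero_ennreal K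
  have hwt : w ≠ ⊤ := ENNReal.natCast_ne_top _
  have hct : coneConst K ≠ ⊤ := coneConst_ne_top K
  set ν := nu K A R
  set ν' := nu K (FractionalIdeal.dual ℤ ℚ A) R'
  have hD : Differentiable ℂ (mellinTail ν) := differentiable_mellinTail (nu_moment K hA hR)
  have hD' : Differentiable ℂ (mellinTail ν') := differentiable_mellinTail (nu_moment K hB hR')
  have hr : Differentiable ℂ fun s : ℂ => 1 - s := by fun_prop
  have hC : (coneConst K / w).toReal ≠ 0 :=
    (ENNReal.toReal_pos (ENNReal.div_ne_zero.2 ⟨coneConst_ne_zero K, hwt⟩)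
      (ENNReal.div_ne_top hct hw0)).ne'
  have hC' : (((coneConst K / w).toReal : ℝ) : ℂ) ≠ 0 := by exact_mod_cast hC
  have hC'' : ((-(coneConst K / w).toReal : ℝ) : ℂ) ≠ 0 := by
    exact_mod_cast neg_ne_zero.2 hC
  refine ⟨(-(coneConst K / w).toReal : ℝ), ((coneConst K / w).toReal : ℝ),
    (-(coneConst K / w).toReal : ℝ), ((coneConst K / w).toReal : ℝ),
    fun s => mellinTail ν s + mellinTail ν' (1 - s),
    fun s => mellinTail ν' s + mellinTail ν (1 - s),
    hD.add (hD'.comp hr), hD'.add (hD.comp hr), hC'', hC', hC'', hC', ?_, ?_, ?_⟩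
  · intro s hs
    rw [xi_eq_integral K hA hR hs]
    exact mellin_split (nu_Iic K hA hR) (nu_moment K hA hR) (nu_singleton K hB hR' 1) hw0 hwt
      hct hinv hs
  · intro s hs
    rw [xi_eq_integral K hB hR' hs]
    exact mellin_split (nu_Iic K hB hR') (nu_moment K hB hR') (nu_singleton K hA hR 1) hw0 hwt
      hct hinv' hs
  · intro s hs0 hs1
    have h1 : s - 1 ≠ 0 := sub_ne_zero.2 hs1
    have h2 : 1 - s ≠ 0 := sub_ne_zero.2 hs1.symm
    have h3 : 1 - s - 1 ≠ 0 := by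
      intro h; apply hs0; linear_combination -h
    have e1 : (1 : ℂ) - (1 - s) = s := by ring
    have e2 : (1 : ℂ) - s - 1 = -s := by ring
    have e3 : (1 : ℂ) - s = -(s - 1) := by ring
    simp only [e1, e2]
    rw [div_neg]
    have e4 : ∀ z : ℂ, z / (1 - s) = -(z / (s - 1)) := fun z => by rw [e3, div_neg]
    rw [e4]
    push_cast
    ring

end Hecke
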